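/- arXiv:1003.0602 — 4 statements merged into one kernel-verified Lean document; each statement's English description precedes it below -/
import Mathlib

section
/- Let F be an algebraically closed field of characteristic 0, V a finite-dimensional F-vector space, and ĝ = gl(V) = End(V). Let d ≥ 1 and m, n ≥ 1, and let e ∈ ĝ be nilpotent with Jordan type ((d+1)^m, d^n), i.e., e^{d+1} = 0, rank(e^d) = m, dim ker(e) = m + n, and dim V = m(d+1) + nd. Let (e, h, f) be an sl2-triple in ĝ. If d = 1, then [ĝ(1)_e, ĝ(1)_e] = ĝ(2)_e; if d ≥ 2, then [ĝ(1)_e, ĝ(1)_e] is a subspace of ĝ(2)_e of codimension exactly 1. -/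
open Module

/-!
Let `p j` (`j : Fin m`) and `q k` (`k : Fin n`) be lowest weight vectors of the irreducible
summands of dimension `d + 1` and `d` of `V`, so that the `e ^ i (p j)` and `e ^ i (q k)` form a
basis of `V` (`exists_basis`). An element of the centraliser of `e` is determined by its values on
these generators (`ext_gen`), and these can be prescribed subject only to `e ^ d` killing the
images of the `q k` (`exists_lift`). Comparing weights, an element of `ĝ(1)_e` is given by a pair of
matrices `α`, `β` through `p j ↦ ∑ α k j • q k`, `q k ↦ ∑ β j k • e (p j)`, and an element of
`ĝ(2)_e` by a pair of square matrices `X`, `Y` through `p j ↦ ∑ X i j • e (p i)`,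
`q k ↦ ∑ Y i k • e (q i)`. The bracket becomes `(β * α' - β' * α, α * β' - α' * β)`. The span of all
such pairs is the hyperplane `tr X + tr Y = 0` (`matrix_reduce`, `finrank_oddBrackets`). If
`d ≥ 2`, the pair `(X, Y)` is determined by the element of `ĝ(2)_e`, so the codimension is `1`. If
`d = 1`, then `e (q k) = 0`, the matrix `Y` acts by zero and can be used to correct the trace, so the
brackets span `ĝ(2)_e`.

The basis is obtained as follows. Counting dimensions with rank-nullity for the powers of `e` gives
`ker e ≤ range (e ^ (d - 1))` (`ker_le_range`). The commutation rule `e_pow_mul_f` then shows that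
`h` has eigenvalue `d` on `range (e ^ d)` and that `h - (d - 1)` maps `ker e` into `range (e ^ d)`,
so `ker e` is the sum of its parts of weight `d` and `d - 1`, of dimensions `m` and `n`. Applying
`f ^ d` and `f ^ (d - 1)` to bases of these parts gives the `p j` and `q k`.
-/

/-! ### The structure of `V` as a module over the `sl2`-triple -/

section Sl2
variable {F : Type*} [Field F] {V : Type*} [AddCommGroup V] [Module F V]
  {e h f : Module.End F V}

lemma h_mul_e_pow (t1 : ⁅h, e⁆ = (2 : F) • e) (k : ℕ) :
    h * e ^ k = e ^ k * h + ((2 * k : ℕ) : F) • e ^ k := by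
  have t : h * e = e * h + (2 : F) • e := by
    rw [← t1, Ring.lie_def]; abel
  induction k with
  | zero => simp
  | succ k ih =>
    rw [pow_succ, ← mul_assoc, ih, add_mul, mul_assoc, t, mul_add, smul_mul_assoc,
      mul_smul_comm, add_assoc, ← add_smul, mul_assoc]
    congr 2
    push_cast; ring

lemma h_mul_f_pow (t2 : ⁅h, f⁆ = (-2 : F) • f) (k : ℕ) :
    h * f ^ k = f ^ k * h - ((2 * k : ℕ) : F) • f ^ k := by
  have t : h * f = f * h - (2 : F) • f := by
    rw [sub_eq_add_neg, ← neg_smul, ← t2, Ring.lie_def]; abel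
  induction k with
  | zero => simp
  | succ k ih =>
    rw [pow_succ, ← mul_assoc, ih, sub_mul, mul_assoc, t, mul_sub, smul_mul_assoc,
      mul_smul_comm, sub_sub, ← add_smul, mul_assoc]
    congr 2
    push_cast; ring

lemma e_pow_mul_f (t1 : ⁅h, e⁆ = (2 : F) • e) (t3 : ⁅e, f⁆ = h) (k : ℕ) :
    e ^ (k + 1) * f = f * e ^ (k + 1) + ((k + 1 : ℕ) : F) • (e ^ k * (h + (k : F) • 1)) := by
  have t : e * f = f * e + h := by
    rw [← t3, Ring.lie_def]; abel
  induction k with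
  | zero => simp [t]
  | succ k ih =>
    have h1 := h_mul_e_pow t1 (k + 1)
    rw [pow_succ' e (k + 1), mul_assoc, ih, mul_add, ← mul_assoc, t, add_mul, h1, mul_smul_comm,
      ← mul_assoc, ← pow_succ', mul_assoc, ← pow_succ']
    simp only [mul_add, mul_smul_comm, mul_one, smul_add]
    push_cast
    module

/-- For a highest weight vector `v` of weight `l`, `e` sends `f ^ (k + 1) v` back to a multiple
of `f ^ k v`, which is nonzero as long as `k < l`. -/
lemma e_pow_f_pow_apply (t2 : ⁅h, f⁆ = (-2 : F) • f) (t3 : ⁅e, f⁆ = h)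
    {v : V} {l : ℕ} (hev : e v = 0) (hhv : h v = (l : F) • v) (k : ℕ) :
    e ((f ^ (k + 1)) v) = (((k + 1 : ℕ) : F) * ((l : F) - k)) • (f ^ k) v := by
  have t : ∀ w, e (f w) = f (e w) + h w := fun w => by
    rw [← t3, Ring.lie_def]; simp
  have hh : ∀ k : ℕ, h ((f ^ k) v) = ((l : F) - (2 * k : ℕ)) • (f ^ k) v := fun k => by
    have := congrArg (fun x => x v) (h_mul_f_pow t2 k)
    simp only [Module.End.mul_apply, LinearMap.sub_apply, LinearMap.smul_apply, hhv, map_smul]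
      at this
    rw [this]; module
  induction k with
  | zero => simp [t, hev, hhv]
  | succ k ih =>
    rw [pow_succ' f (k + 1), Module.End.mul_apply, t, ih, hh, map_smul, ← Module.End.mul_apply,
      ← pow_succ']
    push_cast
    module

/-- For `k ≤ l`, the operator `e ^ k * f ^ k` acts on all highest weight vectors of weight `l` by
one and the same nonzero scalar. -/
lemma e_pow_f_pow_ne [CharZero F] (t2 : ⁅h, f⁆ = (-2 : F) • f) (t3 : ⁅e, f⁆ = h)
    (l : ℕ) : ∀ k ≤ l, ∃ c : F, c ≠ 0 ∧ ∀ v : V, e v = 0 → h v = (l : F) • v →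
      (e ^ k) ((f ^ k) v) = c • v := by
  intro k
  induction k with
  | zero => exact fun _ => ⟨1, one_ne_zero, by simp⟩
  | succ k ih =>
    intro hk
    obtain ⟨c, hc, H⟩ := ih (by omega)
    refine ⟨((k + 1 : ℕ) : F) * ((l : F) - k) * c, ?_, fun v hev hhv => ?_⟩
    · refine mul_ne_zero (mul_ne_zero (by exact_mod_cast k.succ_ne_zero) ?_) hc
      rw [sub_ne_zero]; exact_mod_cast (by omega : l ≠ k)
    · rw [pow_succ e, Module.End.mul_apply, e_pow_f_pow_apply t2 t3 hev hhv, map_smul, H v hev hhv,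
        smul_smul]

/-- Rank-nullity along the powers of `e`: the type `((d+1)^m, d^n)` leaves no room for Jordan
blocks of size less than `d`. -/
lemma ker_le_range [FiniteDimensional F V] {d m n : ℕ} (hd1 : 1 ≤ d)
    (he2 : finrank F (LinearMap.range (e ^ d)) = m)
    (he3 : finrank F (LinearMap.ker e) = m + n)
    (he4 : finrank F V = m * (d + 1) + n * d) :
    LinearMap.ker e ≤ LinearMap.range (e ^ (d - 1)) := by
  have step : ∀ i, finrank F (LinearMap.range (e ^ i)) =
      finrank F (LinearMap.range (e ^ (i + 1))) +
        finrank F (LinearMap.ker e ⊓ LinearMap.range (e ^ i) : Submodule F V) := fun i => by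
    have := LinearMap.finrank_range_add_finrank_ker (e.domRestrict (LinearMap.range (e ^ i)))
    rw [LinearMap.range_domRestrict, LinearMap.ker_domRestrict,
      ← Submodule.finrank_map_subtype_eq, Submodule.map_comap_subtype, ← LinearMap.range_comp] at this
    rw [← this, inf_comm, pow_succ' e]; rfl
  have le : ∀ i, finrank F (LinearMap.range (e ^ i)) ≤
      finrank F (LinearMap.range (e ^ (i + 1))) + (m + n) := fun i => by
    rw [step i, ← he3]
    gcongr
    exact Submodule.finrank_mono inf_le_left
  have up : ∀ i, finrank F V ≤ finrank F (LinearMap.range (e ^ i)) + i * (m + n) := fun i => by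
    induction i with
    | zero =>
      rw [pow_zero, Module.End.one_eq_id, LinearMap.range_id, finrank_top]
      exact Nat.le_add_right _ _
    | succ i ih => have := le i; rw [add_one_mul]; omega
  obtain ⟨d, rfl⟩ := Nat.exists_eq_add_of_le' hd1
  have h1 := up d
  have h2 := step d
  rw [he2] at h2
  have : finrank F (LinearMap.ker e) ≤
      finrank F (LinearMap.ker e ⊓ LinearMap.range (e ^ d) : Submodule F V) := by
    nlinarith
  exact inf_eq_left.mp (Submodule.eq_of_le_of_finrank_le inf_le_left this)

/-- Lowest weight vectors `p j`, `q k` generating `V` as an `F[e]`-module: the vectors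
`e ^ i (p j)` with `i ≤ d` and `e ^ i (q k)` with `i < d` form a basis. -/
lemma exists_basis [CharZero F] [FiniteDimensional F V] {d m n : ℕ} (hd1 : 1 ≤ d)
    (he1 : e ^ (d + 1) = 0)
    (he2 : finrank F (LinearMap.range (e ^ d)) = m)
    (he3 : finrank F (LinearMap.ker e) = m + n)
    (he4 : finrank F V = m * (d + 1) + n * d)
    (t1 : ⁅h, e⁆ = (2 : F) • e) (t2 : ⁅h, f⁆ = (-2 : F) • f) (t3 : ⁅e, f⁆ = h) :
    ∃ (p : Fin m → V) (q : Fin n → V)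
      (b : Basis ((Fin m × Fin (d + 1)) ⊕ (Fin n × Fin d)) F V),
      (∀ j, h (p j) = (-d : F) • p j) ∧ (∀ k, h (q k) = (1 - d : F) • q k) ∧
      (∀ k, (e ^ d) (q k) = 0) ∧
      (∀ j i, b (.inl (j, i)) = (e ^ (i : ℕ)) (p j)) ∧
      (∀ k i, b (.inr (k, i)) = (e ^ (i : ℕ)) (q k)) := by
  have hker := ker_le_range hd1 he2 he3 he4
  obtain ⟨D, rfl⟩ := Nat.exists_eq_add_of_le' hd1
  rw [Nat.add_sub_cancel] at hker
  -- the two spaces of highest weight vectors, of weights `D + 1` and `D`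
  set A := LinearMap.range (e ^ (D + 1)) with hA
  set B : Submodule F V := LinearMap.ker e ⊓ LinearMap.ker (h - (D : F) • 1) with hB
  have memB : ∀ v, v ∈ B ↔ e v = 0 ∧ h v = (D : F) • v := fun v => by
    simp [hB, sub_eq_zero]
  have Ae : ∀ v ∈ A, e v = 0 := by
    rintro _ ⟨u, rfl⟩
    rw [← Module.End.mul_apply, ← pow_succ', he1]; rfl
  -- `e ^ (D + 2) = 0` turns the commutation rule of `e ^ (D + 2)` and `f` into
  -- `e ^ (D + 1) * (h + D + 1) = 0`
  have Ah : ∀ v ∈ A, h v = ((D + 1 : ℕ) : F) • v := by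
    rintro _ ⟨u, rfl⟩
    have h1 := e_pow_mul_f t1 t3 (D + 1)
    rw [he1, zero_mul, mul_zero, zero_add, eq_comm, smul_eq_zero] at h1
    have h2 := h1.resolve_left (by exact_mod_cast (D + 1).succ_ne_zero)
    have h3 := congrArg (fun x => x u) (h_mul_e_pow t1 (D + 1))
    have h4 := congrArg (fun x => x u) h2
    simp only [Module.End.mul_apply, LinearMap.add_apply, LinearMap.smul_apply, map_add, map_smul,
      LinearMap.zero_apply, Module.End.one_apply] at h3 h4
    rw [h3, eq_neg_of_add_eq_zero_left h4]
    push_cast; module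
  have kerle : LinearMap.ker e ≤ A ⊔ B := by
    intro v hv
    obtain ⟨u, rfl⟩ := hker hv
    have hv' : (e ^ (D + 1)) u = 0 := by
      rw [pow_succ', Module.End.mul_apply]; exact hv
    have h1 := congrArg (fun x => x u) (e_pow_mul_f t1 t3 D)
    have h3 := congrArg (fun x => x u) (h_mul_e_pow t1 D)
    simp only [Module.End.mul_apply, LinearMap.add_apply, LinearMap.smul_apply, map_add, map_smul,
      Module.End.one_apply, hv', map_zero, zero_add] at h1 h3
    have hD : ((D + 1 : ℕ) : F) ≠ 0 := by exact_mod_cast D.succ_ne_zero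
    -- `h - D` sends `ker e` into `A`
    have h5 : h ((e ^ D) u) - (D : F) • (e ^ D) u ∈ A := by
      have : h ((e ^ D) u) - (D : F) • (e ^ D) u
          = ((D + 1 : ℕ) : F)⁻¹ • (e ^ (D + 1)) (f u) := by
        rw [h1, smul_smul, inv_mul_cancel₀ hD, one_smul, h3]
        push_cast; module
      rw [this]
      exact A.smul_mem _ ⟨_, rfl⟩
    set v := (e ^ D) u
    rw [← add_sub_cancel (h v - (D : F) • v) v]
    refine Submodule.add_mem_sup h5 ((memB _).2 ⟨?_, ?_⟩)
    · rw [map_sub, Ae _ h5, LinearMap.mem_ker.1 hv, sub_zero]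
    · rw [map_sub, Ah _ h5]; push_cast; module
  have hsup : A ⊔ B = LinearMap.ker e :=
    le_antisymm (sup_le (fun v hv => Ae v hv) inf_le_left) kerle
  have hinf : A ⊓ B = ⊥ := by
    rw [eq_bot_iff]
    rintro v ⟨h1, h2⟩
    have := Ah v h1
    rw [((memB v).1 h2).2] at this
    have h0 : v = ((D + 1 : ℕ) : F) • v - (D : F) • v := by push_cast; module
    rw [← this, sub_self] at h0
    exact h0
  have dimB : finrank F B = n := by
    have := Submodule.finrank_sup_add_finrank_inf_eq A B
    rw [hsup, hinf, finrank_bot, he2, he3] at this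
    omega
  let a := finBasisOfFinrankEq F A he2
  let b := finBasisOfFinrankEq F B dimB
  have bB := fun k => (memB _).1 (b k).2
  obtain ⟨c, hc, Hc⟩ := e_pow_f_pow_ne (V := V) t2 t3 (D + 1) (D + 1) le_rfl
  obtain ⟨c', hc', Hc'⟩ := e_pow_f_pow_ne (V := V) t2 t3 D D le_rfl
  set p : Fin m → V := fun j => (f ^ (D + 1)) (a j)
  set q : Fin n → V := fun k => (f ^ D) (b k)
  have ep : ∀ j, (e ^ (D + 1)) (p j) = c • (a j : V) := fun j =>
    Hc _ (Ae _ (a j).2) (Ah _ (a j).2)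
  have eq : ∀ k, (e ^ D) (q k) = c' • (b k : V) := fun k => Hc' _ (bB k).1 (bB k).2
  have eq' : ∀ k, (e ^ (D + 1)) (q k) = 0 := fun k => by
    rw [pow_succ', Module.End.mul_apply, eq, map_smul, (bB k).1, smul_zero]
  let g : (Fin m × Fin (D + 1 + 1)) ⊕ (Fin n × Fin (D + 1)) → V :=
    Sum.elim (fun x => (e ^ (x.2 : ℕ)) (p x.1)) (fun x => (e ^ (x.2 : ℕ)) (q x.1))
  set W := Submodule.span F (Set.range g) with hW
  have pW : ∀ j i, (e ^ i) (p j) ∈ W := fun j i => by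
    by_cases hi : i < D + 1 + 1
    · exact Submodule.subset_span ⟨.inl (j, ⟨i, hi⟩), rfl⟩
    · rw [pow_eq_zero_of_le (by omega) he1]; exact W.zero_mem
  have qW : ∀ k i, (e ^ i) (q k) ∈ W := fun k i => by
    by_cases hi : i < D + 1
    · exact Submodule.subset_span ⟨.inr (k, ⟨i, hi⟩), rfl⟩
    · obtain ⟨r, rfl⟩ := Nat.exists_eq_add_of_le' (not_lt.1 hi)
      rw [pow_add, Module.End.mul_apply, eq', map_zero]; exact W.zero_mem
  have AW : ∀ i ≤ D + 1, A ≤ W.map (e ^ i) := fun i hi v hv => by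
    have : ((∑ i, a.repr ⟨v, hv⟩ i • a i : A) : V) = v :=
      congrArg Subtype.val (a.sum_repr ⟨v, hv⟩)
    rw [← this, AddSubmonoidClass.coe_finsetSum]
    refine Submodule.sum_mem _ fun j _ => ?_
    refine Submodule.smul_mem _ _ ?_
    refine (Submodule.smul_mem_iff _ hc).1 ?_
    rw [← ep]
    refine ⟨(e ^ (D + 1 - i)) (p j), pW _ _, ?_⟩
    rw [← Module.End.mul_apply, ← pow_add, Nat.add_sub_cancel' hi]
  have BW : ∀ i ≤ D, B ≤ W.map (e ^ i) := fun i hi v hv => by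
    have : ((∑ i, b.repr ⟨v, hv⟩ i • b i : B) : V) = v :=
      congrArg Subtype.val (b.sum_repr ⟨v, hv⟩)
    rw [← this, AddSubmonoidClass.coe_finsetSum]
    refine Submodule.sum_mem _ fun j _ => ?_
    refine Submodule.smul_mem _ _ ?_
    refine (Submodule.smul_mem_iff _ hc').1 ?_
    rw [← eq]
    refine ⟨(e ^ (D - i)) (q j), qW _ _, ?_⟩
    rw [← Module.End.mul_apply, ← pow_add, Nat.add_sub_cancel' hi]
  -- `W` contains `ker (e ^ k)` for all `k`: subtract an element of `W` with the same image
  -- under `e ^ k` to pass from `k + 1` to `k`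
  have spanW : ∀ k ≤ D + 1 + 1, ∀ v, (e ^ k) v = 0 → v ∈ W := by
    intro k
    induction k with
    | zero => intro _ v hv; rw [pow_zero, Module.End.one_apply] at hv; simp [hv]
    | succ k ih =>
      intro hk v hv
      have : (e ^ k) v ∈ W.map (e ^ k) := by
        rcases (by omega : k = D + 1 ∨ k ≤ D) with rfl | hkD
        · exact AW _ le_rfl ⟨v, rfl⟩
        · have hv' : (e ^ k) v ∈ A ⊔ B := by
            rw [hsup, LinearMap.mem_ker, ← Module.End.mul_apply, ← pow_succ', hv]
          exact sup_le (AW k (by omega)) (BW k hkD) hv'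
      obtain ⟨w, hw, hwv⟩ := this
      have := ih (by omega) (v - w) (by rw [map_sub, hwv, sub_self])
      simpa using W.add_mem this hw
  have top : ⊤ ≤ W := fun v _ => spanW _ le_rfl v (by rw [he1]; rfl)
  have card : Fintype.card ((Fin m × Fin (D + 1 + 1)) ⊕ (Fin n × Fin (D + 1))) = finrank F V := by
    simp [he4]
  refine ⟨p, q, basisOfTopLeSpanOfCardEqFinrank g top card, fun j => ?_, fun k => ?_, eq', ?_, ?_⟩
  · have := congrArg (fun x => x (a j : V)) (h_mul_f_pow t2 (D + 1))
    simp only [Module.End.mul_apply, LinearMap.sub_apply, LinearMap.smul_apply, Ah _ (a j).2,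
      map_smul] at this
    rw [this]; push_cast; module
  · have := congrArg (fun x => x (b k : V)) (h_mul_f_pow t2 D)
    simp only [Module.End.mul_apply, LinearMap.sub_apply, LinearMap.smul_apply, (bB k).2,
      map_smul] at this
    rw [this]; push_cast; module
  · simp [g]
  · simp [g]
end Sl2

/-! ### The centraliser of `e` -/

section Centraliser
variable {F : Type*} [Field F] {V : Type*} [AddCommGroup V] [Module F V]
  {e h : Module.End F V} {d m n : ℕ} {p : Fin m → V} {q : Fin n → V}
  {b : Basis ((Fin m × Fin (d + 1)) ⊕ (Fin n × Fin d)) F V}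

/-- If `h` is diagonal in the basis `b`, its `l`-eigenspace is contained in any subspace that
contains the basis vectors of weight `l`. -/
lemma mem_weight {ι : Type*} [Fintype ι] (b : Basis ι F V) (w : ι → F)
    (hb : ∀ i, h (b i) = w i • b i) {l : F} {v : V} (hv : h v = l • v) (W : Submodule F V)
    (hW : ∀ i, w i = l → b i ∈ W) : v ∈ W := by
  have key : ∀ i, (w i - l) * b.repr v i = 0 := by
    have h1 : ∑ i, ((w i - l) * b.repr v i) • b i = 0 := by
      have h2 : h v - l • v = 0 := by rw [hv, sub_self]
      have h3 : v = ∑ i, b.repr v i • b i := (b.sum_repr v).symm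
      generalize b.repr v = c at h3 ⊢
      rw [h3, map_sum, Finset.smul_sum, ← Finset.sum_sub_distrib] at h2
      rw [← h2]
      refine Finset.sum_congr rfl fun i _ => ?_
      rw [map_smul, hb]
      module
    exact Fintype.linearIndependent_iff.1 b.linearIndependent _ h1
  rw [← b.sum_repr v]
  refine Submodule.sum_mem _ fun i _ => ?_
  rcases mul_eq_zero.1 (key i) with h0 | h0
  · exact W.smul_mem _ (hW i (sub_eq_zero.1 h0))
  · rw [h0, zero_smul]; exact W.zero_mem

/-- An element of the centraliser of `e` is determined by its values on the generators. -/
lemma ext_gen (hbp : ∀ j i, b (.inl (j, i)) = (e ^ (i : ℕ)) (p j))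
    (hbq : ∀ k i, b (.inr (k, i)) = (e ^ (i : ℕ)) (q k))
    {x y : Module.End F V} (hx : Commute e x) (hy : Commute e y)
    (hp : ∀ j, x (p j) = y (p j)) (hq : ∀ k, x (q k) = y (q k)) : x = y := by
  have H : ∀ (z : Module.End F V), Commute e z → ∀ i v, z ((e ^ i) v) = (e ^ i) (z v) := by
    intro z hz i v
    exact (congrArg (fun t => t v) (hz.pow_left i).eq).symm
  refine b.ext ?_
  rintro (⟨j, i⟩ | ⟨k, i⟩)
  · rw [hbp, H x hx, H y hy, hp]
  · rw [hbq, H x hx, H y hy, hq]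

/-- Free choice of the values on generators, subject to the relations `e ^ (d + 1) = 0` and
`e ^ d (q k) = 0`. -/
lemma exists_lift (he1 : e ^ (d + 1) = 0) (hq : ∀ k, (e ^ d) (q k) = 0)
    (hbp : ∀ j i, b (.inl (j, i)) = (e ^ (i : ℕ)) (p j))
    (hbq : ∀ k i, b (.inr (k, i)) = (e ^ (i : ℕ)) (q k)) :
    ∃ L : ((Fin m → V) × (Fin n → V)) →ₗ[F] Module.End F V,
      ∀ u, (∀ k, (e ^ d) (u.2 k) = 0) →
        Commute e (L u) ∧ (∀ j, L u (p j) = u.1 j) ∧ (∀ k, L u (q k) = u.2 k) := by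
  let T : ((Fin m → V) × (Fin n → V)) →ₗ[F]
      ((Fin m × Fin (d + 1)) ⊕ (Fin n × Fin d)) → V :=
    { toFun := fun u => Sum.elim (fun x => (e ^ (x.2 : ℕ)) (u.1 x.1))
        (fun x => (e ^ (x.2 : ℕ)) (u.2 x.1))
      map_add' := fun u v => by ext (x | x) <;> simp
      map_smul' := fun c u => by ext (x | x) <;> simp }
  refine ⟨(b.constr F).toLinearMap ∘ₗ T, fun u hu => ?_⟩
  set L := ((b.constr F).toLinearMap ∘ₗ T) u with hL
  have Lp : ∀ j (i : ℕ), L ((e ^ i) (p j)) = (e ^ i) (u.1 j) := fun j i => by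
    by_cases hi : i < d + 1
    · have := b.constr_basis F (T u) (.inl (j, ⟨i, hi⟩))
      rw [hbp] at this
      exact this
    · rw [pow_eq_zero_of_le (by omega) he1]; simp
  have Lq : ∀ k (i : ℕ), L ((e ^ i) (q k)) = (e ^ i) (u.2 k) := fun k i => by
    by_cases hi : i < d
    · have := b.constr_basis F (T u) (.inr (k, ⟨i, hi⟩))
      rw [hbq] at this
      exact this
    · obtain ⟨r, rfl⟩ := Nat.exists_eq_add_of_le' (not_lt.1 hi)
      rw [pow_add, Module.End.mul_apply, Module.End.mul_apply, hq, hu]; simp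
  refine ⟨?_, fun j => Lp j 0, fun k => Lq k 0⟩
  refine b.ext ?_
  rintro (⟨j, i⟩ | ⟨k, i⟩)
  · rw [hbp, Module.End.mul_apply, Module.End.mul_apply, Lp, ← Module.End.mul_apply e,
      ← Module.End.mul_apply e, ← pow_succ', Lp]
  · rw [hbq, Module.End.mul_apply, Module.End.mul_apply, Lq, ← Module.End.mul_apply e,
      ← Module.End.mul_apply e, ← pow_succ', Lq]

/-- For elements of the centraliser of `e` the weight can be read off on generators. -/
lemma weight_of_gen (t1 : ⁅h, e⁆ = (2 : F) • e)
    (hp : ∀ j, h (p j) = (-d : F) • p j) (hq : ∀ k, h (q k) = (1 - d : F) • q k)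
    (hbp : ∀ j i, b (.inl (j, i)) = (e ^ (i : ℕ)) (p j))
    (hbq : ∀ k i, b (.inr (k, i)) = (e ^ (i : ℕ)) (q k))
    {x : Module.End F V} (hx : Commute e x) (l : F)
    (hxp : ∀ j, h (x (p j)) = (l - d) • x (p j))
    (hxq : ∀ k, h (x (q k)) = (l + 1 - d) • x (q k)) : ⁅h, x⁆ = l • x := by
  have hc : Commute e ⁅h, x⁆ := by
    have t : h * e = e * h + (2 : F) • e := by
      rw [← t1, Ring.lie_def]; abel
    have hx' : e * x = x * e := hx
    have h1 : e * (h * x) = h * x * e - (2 : F) • (x * e) := by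
      rw [mul_assoc, ← hx', ← mul_assoc h, t, add_mul, smul_mul_assoc, mul_assoc, add_sub_cancel_right]
    have h2 : e * (x * h) = x * h * e - (2 : F) • (x * e) := by
      rw [mul_assoc x, t, mul_add, mul_smul_comm, add_sub_cancel_right, ← mul_assoc, hx', mul_assoc]
    rw [Ring.lie_def, Commute, SemiconjBy, mul_sub, sub_mul, h1, h2]
    abel
  refine ext_gen hbp hbq hc (hx.smul_right l) (fun j => ?_) (fun k => ?_)
  · rw [Ring.lie_def]
    simp only [LinearMap.sub_apply, Module.End.mul_apply, LinearMap.smul_apply, hxp, hp, map_smul]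
    module
  · rw [Ring.lie_def]
    simp only [LinearMap.sub_apply, Module.End.mul_apply, LinearMap.smul_apply, hxq, hq, map_smul]
    module
end Centraliser

/-! ### Commutators of off-diagonal block matrices -/

section Matrices
open Matrix
variable {F : Type*} [Field F] {m n : ℕ}

/-- Modulo the commutators of odd matrices in `gl(m|n)`, every even matrix is a multiple of a single
diagonal matrix unit of the second block. -/
lemma matrix_reduce (k0 : Fin n) (i0 : Fin m)
    (S : Submodule F (Matrix (Fin m) (Fin m) F × Matrix (Fin n) (Fin n) F))
    (hS : ∀ (α : Matrix (Fin n) (Fin m) F) (β : Matrix (Fin m) (Fin n) F),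
      (β * α, -(α * β)) ∈ S) (X : Matrix (Fin m) (Fin m) F) (Y : Matrix (Fin n) (Fin n) F) :
    (X, Y) - (X.trace + Y.trace) • ((0 : Matrix (Fin m) (Fin m) F), single k0 k0 (1 : F)) ∈ S := by
  have h1 : ∀ i j (c : F), ((single i j c, 0) - (single i j c).trace •
      ((0 : Matrix (Fin m) (Fin m) F), single k0 k0 (1 : F))) ∈ S := fun i j c => by
    have := hS (single k0 j 1) (single i k0 c)
    rw [single_mul_single_same, mul_one] at this
    convert this using 1
    by_cases hij : i = j
    · subst hij; simp
    · have : (single i j c).trace = 0 := trace_single_eq_of_ne _ _ _ hij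
      rw [this, single_mul_single_of_ne (h := fun h => hij h.symm)]; simp
  have h2 : ∀ k l (c : F), ((0, single k l c) - (single k l c).trace •
      ((0 : Matrix (Fin m) (Fin m) F), single k0 k0 (1 : F))) ∈ S := fun k l c => by
    have a1 := hS (single k i0 c) (single i0 l 1)
    have a2 := h1 i0 i0 (single k l c).trace
    rw [single_mul_single_same, mul_one] at a1
    refine (Submodule.neg_mem_iff S).1 ?_
    convert S.sub_mem a1 a2 using 1
    by_cases hij : k = l
    · subst hij; simp; abel
    · have : (single k l c).trace = 0 := trace_single_eq_of_ne _ _ _ hij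
      rw [this, single_mul_single_of_ne (h := fun h => hij h.symm)]; simp
  generalize ((0 : Matrix (Fin m) (Fin m) F), single k0 k0 (1 : F)) = Z at h1 h2 ⊢
  let r1 : Matrix (Fin m) (Fin m) F →ₗ[F] Matrix (Fin m) (Fin m) F × Matrix (Fin n) (Fin n) F :=
    LinearMap.inl F _ _ - (traceLinearMap (Fin m) F F).smulRight Z
  let r2 : Matrix (Fin n) (Fin n) F →ₗ[F] Matrix (Fin m) (Fin m) F × Matrix (Fin n) (Fin n) F :=
    LinearMap.inr F _ _ - (traceLinearMap (Fin n) F F).smulRight Z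
  have H1 : r1 X ∈ S := by
    rw [matrix_eq_sum_single X, map_sum]
    refine S.sum_mem fun i _ => ?_
    rw [map_sum]
    exact S.sum_mem fun j _ => h1 i j _
  have H2 : r2 Y ∈ S := by
    rw [matrix_eq_sum_single Y, map_sum]
    refine S.sum_mem fun i _ => ?_
    rw [map_sum]
    exact S.sum_mem fun j _ => h2 i j _
  convert S.add_mem H1 H2 using 1
  have h3 : (X, Y) = (X, (0 : Matrix (Fin n) (Fin n) F)) + ((0 : Matrix (Fin m) (Fin m) F), Y) := by
    simp
  have e1 : r1 X = (X, 0) - X.trace • Z := rfl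
  have e2 : r2 Y = (0, Y) - Y.trace • Z := rfl
  rw [h3, e1, e2]
  module

/-- The span of the ordinary (not super) commutators of odd elements of `gl(m|n)`, an odd element
being written as a pair of off-diagonal blocks `(α, β)` and an even one as the pair of its
diagonal blocks. -/
def oddBrackets (F : Type*) [Field F] (m n : ℕ) :
    Submodule F (Matrix (Fin m) (Fin m) F × Matrix (Fin n) (Fin n) F) :=
  Submodule.span F {z | ∃ (α α' : Matrix (Fin n) (Fin m) F) (β β' : Matrix (Fin m) (Fin n) F),
    z = (β * α' - β' * α, α * β' - α' * β)}

lemma mem_oddBrackets (α : Matrix (Fin n) (Fin m) F) (β : Matrix (Fin m) (Fin n) F) :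
    (β * α, -(α * β)) ∈ oddBrackets F m n :=
  Submodule.subset_span ⟨0, α, β, 0, by simp⟩

/-- The span of the odd brackets is the hyperplane `tr X + tr Y = 0`. -/
lemma finrank_oddBrackets (hm : 1 ≤ m) (hn : 1 ≤ n) :
    finrank F (oddBrackets F m n) + 1 =
      finrank F (Matrix (Fin m) (Fin m) F × Matrix (Fin n) (Fin n) F) := by
  let T : Matrix (Fin m) (Fin m) F × Matrix (Fin n) (Fin n) F →ₗ[F] F :=
    (traceLinearMap (Fin m) F F).coprod (traceLinearMap (Fin n) F F)
  have hT : ∀ X Y, T (X, Y) = X.trace + Y.trace := fun X Y => by simp [T]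
  have hker : oddBrackets F m n = LinearMap.ker T := by
    refine le_antisymm (Submodule.span_le.2 ?_) ?_
    · rintro _ ⟨α, α', β, β', rfl⟩
      rw [SetLike.mem_coe, LinearMap.mem_ker, hT, trace_sub, trace_sub, trace_mul_comm α,
        trace_mul_comm α']
      ring
    · rintro ⟨X, Y⟩ h0
      have := matrix_reduce (⟨0, hn⟩ : Fin n) (⟨0, hm⟩ : Fin m) _ mem_oddBrackets X Y
      rw [LinearMap.mem_ker, hT] at h0
      rwa [h0, zero_smul, sub_zero] at this
  have hsurj : LinearMap.range T = ⊤ := by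
    rw [LinearMap.range_eq_top]
    exact fun c => ⟨(single ⟨0, hm⟩ ⟨0, hm⟩ c, 0), by rw [hT]; simp⟩
  have := T.finrank_range_add_finrank_ker
  rw [hsurj, finrank_top, finrank_self] at this
  rw [hker, ← this, add_comm]
end Matrices

/-! ### The bracket of the weight one part -/

/-- For nilpotent `e ∈ gl(V)` of Jordan type `((d+1)^m, d^n)`:
if `d = 1` then `[ĝ(1)_e, ĝ(1)_e] = ĝ(2)_e`, and if `d ≥ 2` then
`[ĝ(1)_e, ĝ(1)_e]` has codimension exactly `1` in `ĝ(2)_e`. -/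
theorem bracket_g1e_g1e_two_block_gl
    (F : Type*) [Field F] [IsAlgClosed F] [CharZero F]
    (V : Type*) [AddCommGroup V] [Module F V] [FiniteDimensional F V]
    (d m n : ℕ) (hd1 : 1 ≤ d) (hm : 1 ≤ m) (hn : 1 ≤ n)
    (e h f : Module.End F V)
    (he1 : e ^ (d + 1) = 0)
    (he2 : finrank F (LinearMap.range (e ^ d)) = m)
    (he3 : finrank F (LinearMap.ker e) = m + n)
    (he4 : finrank F V = m * (d + 1) + n * d)
    (t1 : ⁅h, e⁆ = (2 : F) • e) (t2 : ⁅h, f⁆ = (-2 : F) • f) (t3 : ⁅e, f⁆ = h)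
    (g1e : Set (Module.End F V))
    (hg1e : g1e = {x : Module.End F V | ⁅h, x⁆ = (1 : F) • x ∧ ⁅e, x⁆ = 0})
    (g2e : Submodule F (Module.End F V))
    (hg2e : (g2e : Set (Module.End F V)) =
      {x : Module.End F V | ⁅h, x⁆ = (2 : F) • x ∧ ⁅e, x⁆ = 0})
    (S : Submodule F (Module.End F V))
    (hS : S = Submodule.span F
      {z : Module.End F V | ∃ a ∈ g1e, ∃ b ∈ g1e, z = ⁅a, b⁆}) :
    (d = 1 → S = g2e) ∧
      (2 ≤ d → S ≤ g2e ∧ finrank F S + 1 = finrank F g2e) := by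
  obtain ⟨p, q, b, hp, hq, hqd, hbp, hbq⟩ := exists_basis hd1 he1 he2 he3 he4 t1 t2 t3
  have comm : ∀ x : Module.End F V, ⁅e, x⁆ = 0 ↔ Commute e x := fun x => by
    rw [Ring.lie_def, sub_eq_zero]; rfl
  have hep : ∀ j, h (e (p j)) = (2 - d : F) • e (p j) := fun j => by
    have := congrArg (fun x => x (p j)) (h_mul_e_pow t1 1)
    simp only [pow_one, Module.End.mul_apply, LinearMap.add_apply, LinearMap.smul_apply, hp,
      map_smul] at this
    rw [this]; push_cast; module
  have heq : ∀ k, h (e (q k)) = (3 - d : F) • e (q k) := fun k => by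
    have := congrArg (fun x => x (q k)) (h_mul_e_pow t1 1)
    simp only [pow_one, Module.End.mul_apply, LinearMap.add_apply, LinearMap.smul_apply, hq,
      map_smul] at this
    rw [this]; push_cast; module
  -- the weights of the basis
  have hwt : ∀ x, h (b x) = (Sum.elim (fun y => (2 * (y.2 : ℕ) - d : F))
      (fun y => (2 * (y.2 : ℕ) + 1 - d : F)) x) • b x := by
    rintro (⟨j, i⟩ | ⟨k, i⟩)
    · have := congrArg (fun x => x (p j)) (h_mul_e_pow t1 i)
      simp only [Module.End.mul_apply, LinearMap.add_apply, LinearMap.smul_apply, hp,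
        map_smul] at this
      rw [hbp, this, Sum.elim_inl]; push_cast; module
    · have := congrArg (fun x => x (q k)) (h_mul_e_pow t1 i)
      simp only [Module.End.mul_apply, LinearMap.add_apply, LinearMap.smul_apply, hq,
        map_smul] at this
      rw [hbq, this, Sum.elim_inr]; push_cast; module
  -- the three weight spaces that receive generators
  have w1 : ∀ v, h v = (1 - d : F) • v → ∃ c : Fin n → F, ∑ k, c k • q k = v := fun v hv => by
    refine (Submodule.mem_span_range_iff_exists_fun F).1 (mem_weight b _ hwt hv _ ?_)
    rintro (⟨j, i⟩ | ⟨k, i⟩) hi <;> simp only [Sum.elim_inl, Sum.elim_inr] at hi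
    · have : ((2 * (i : ℕ) : ℕ) : F) = (1 : ℕ) := by push_cast; linear_combination hi
      have := Nat.cast_injective this
      omega
    · have : ((2 * (i : ℕ) : ℕ) : F) = (0 : ℕ) := by push_cast; linear_combination hi
      have := Nat.cast_injective this
      rw [hbq, (by omega : (i : ℕ) = 0)]
      exact Submodule.subset_span ⟨k, rfl⟩
  have w2 : ∀ v, h v = (2 - d : F) • v → ∃ c : Fin m → F, ∑ j, c j • e (p j) = v := fun v hv => by
    refine (Submodule.mem_span_range_iff_exists_fun F).1 (mem_weight b _ hwt hv _ ?_)
    rintro (⟨j, i⟩ | ⟨k, i⟩) hi <;> simp only [Sum.elim_inl, Sum.elim_inr] at hi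
    · have : ((2 * (i : ℕ) : ℕ) : F) = (2 : ℕ) := by push_cast; linear_combination hi
      have := Nat.cast_injective this
      rw [hbp, (by omega : (i : ℕ) = 1), pow_one]
      exact Submodule.subset_span ⟨j, rfl⟩
    · have : ((2 * (i : ℕ) + 1 : ℕ) : F) = (2 : ℕ) := by push_cast; linear_combination hi
      have := Nat.cast_injective this
      omega
  have w3 : ∀ v, h v = (3 - d : F) • v → ∃ c : Fin n → F, ∑ k, c k • e (q k) = v := fun v hv => by
    refine (Submodule.mem_span_range_iff_exists_fun F).1 (mem_weight b _ hwt hv _ ?_)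
    rintro (⟨j, i⟩ | ⟨k, i⟩) hi <;> simp only [Sum.elim_inl, Sum.elim_inr] at hi
    · have : ((2 * (i : ℕ) : ℕ) : F) = (3 : ℕ) := by push_cast; linear_combination hi
      have := Nat.cast_injective this
      omega
    · have : ((2 * (i : ℕ) + 1 : ℕ) : F) = (3 : ℕ) := by push_cast; linear_combination hi
      have := Nat.cast_injective this
      rw [hbq, (by omega : (i : ℕ) = 1), pow_one]
      exact Submodule.subset_span ⟨k, rfl⟩
  have epd : ∀ j, (e ^ d) (e (p j)) = 0 := fun j => by
    rw [← Module.End.mul_apply, ← pow_succ, he1]; rfl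
  have eqd : ∀ k, (e ^ d) (e (q k)) = 0 := fun k => by
    rw [← Module.End.mul_apply, ← pow_succ, he1]; rfl
  obtain ⟨L, hL⟩ := exists_lift (b := b) he1 hqd hbp hbq
  -- elements of weight `1`
  have g1_of : ∀ (α : Matrix (Fin n) (Fin m) F) (β : Matrix (Fin m) (Fin n) F), ∃ x ∈ g1e,
      (∀ j, x (p j) = ∑ k, α k j • q k) ∧ (∀ k, x (q k) = ∑ j, β j k • e (p j)) := by
    intro α β
    obtain ⟨h1, h2, h3⟩ := hL (fun j => ∑ k, α k j • q k, fun k => ∑ j, β j k • e (p j))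
      (fun k => by simp [epd])
    refine ⟨_, ?_, h2, h3⟩
    rw [hg1e]
    refine ⟨weight_of_gen t1 hp hq hbp hbq h1 1 (fun j => ?_) (fun k => ?_), (comm _).2 h1⟩
    · rw [h2]
      simp only [map_sum, map_smul, hq, Finset.smul_sum]
      exact Finset.sum_congr rfl fun i _ => by module
    · rw [h3]
      simp only [map_sum, map_smul, hep, Finset.smul_sum]
      exact Finset.sum_congr rfl fun i _ => by module
  have apply_wt : ∀ {x : Module.End F V} {l c : F} {v : V}, ⁅h, x⁆ = l • x → h v = c • v →
      h (x v) = (l + c) • x v := by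
    intro x l c v hx hv
    have := congrArg (fun t => t v) hx
    simp only [Ring.lie_def, LinearMap.sub_apply, Module.End.mul_apply, LinearMap.smul_apply, hv,
      map_smul] at this
    rw [eq_add_of_sub_eq this]; module
  have g1_to : ∀ x ∈ g1e, ∃ (α : Matrix (Fin n) (Fin m) F) (β : Matrix (Fin m) (Fin n) F),
      (∀ j, x (p j) = ∑ k, α k j • q k) ∧ (∀ k, x (q k) = ∑ j, β j k • e (p j)) := by
    intro x hx
    rw [hg1e] at hx
    have h1 := fun j => w1 (x (p j)) (by rw [apply_wt hx.1 (hp j)]; module)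
    have h2 := fun k => w2 (x (q k)) (by rw [apply_wt hx.1 (hq k)]; module)
    choose α hα using h1
    choose β hβ using h2
    exact ⟨fun k j => α j k, fun j k => β k j, fun j => (hα j).symm, fun k => (hβ k).symm⟩
  -- elements of weight `2`, parametrised by pairs of square matrices
  let P : (Matrix (Fin m) (Fin m) F × Matrix (Fin n) (Fin n) F) →ₗ[F]
      (Fin m → V) × (Fin n → V) :=
    { toFun := fun Z => (fun j => ∑ i, Z.1 i j • e (p i), fun k => ∑ i, Z.2 i k • e (q i))
      map_add' := fun Z Z' => by ext <;> simp [add_smul, Finset.sum_add_distrib]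
      map_smul' := fun c Z => by ext <;> simp [mul_smul, Finset.smul_sum] }
  let Φ := L ∘ₗ P
  have hΦ : ∀ Z, Commute e (Φ Z) ∧ (∀ j, Φ Z (p j) = ∑ i, Z.1 i j • e (p i)) ∧
      (∀ k, Φ Z (q k) = ∑ i, Z.2 i k • e (q i)) := fun Z =>
    hL (P Z) fun k => by simp [P, eqd]
  have mem2 : ∀ x, x ∈ g2e ↔ ⁅h, x⁆ = (2 : F) • x ∧ ⁅e, x⁆ = 0 := fun x => by
    rw [← SetLike.mem_coe, hg2e]; rfl
  have rangeΦ : LinearMap.range Φ = g2e := by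
    refine le_antisymm ?_ fun x hx => ?_
    · rintro _ ⟨Z, rfl⟩
      obtain ⟨h1, h2, h3⟩ := hΦ Z
      refine (mem2 _).2
        ⟨weight_of_gen t1 hp hq hbp hbq h1 2 (fun j => ?_) (fun k => ?_), (comm _).2 h1⟩
      · rw [h2]
        simp only [map_sum, map_smul, hep, Finset.smul_sum]
        exact Finset.sum_congr rfl fun i _ => by module
      · rw [h3]
        simp only [map_sum, map_smul, heq, Finset.smul_sum]
        exact Finset.sum_congr rfl fun i _ => by module
    · rw [mem2] at hx
      have h1 := fun j => w2 (x (p j)) (by rw [apply_wt hx.1 (hp j)]; module)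
      have h2 := fun k => w3 (x (q k)) (by rw [apply_wt hx.1 (hq k)]; module)
      choose α hα using h1
      choose β hβ using h2
      obtain ⟨h1, h2, h3⟩ := hΦ (fun i j => α j i, fun i j => β j i)
      refine ⟨_, ext_gen hbp hbq h1 ((comm x).1 hx.2) (fun j => ?_) (fun k => ?_)⟩
      · rw [h2]; exact hα j
      · rw [h3]; exact hβ k
  have sum_mul : ∀ {A B C : ℕ} (M : Matrix (Fin A) (Fin B) F) (N : Matrix (Fin B) (Fin C) F)
      (v : Fin A → V) (c : Fin C),
      ∑ k, N k c • ∑ i, M i k • v i = ∑ i, (M * N) i c • v i := by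
    intro A B C M N v c
    simp only [Matrix.mul_apply, Finset.sum_smul, Finset.smul_sum]
    rw [Finset.sum_comm]
    exact Finset.sum_congr rfl fun i _ => Finset.sum_congr rfl fun k _ => by module
  -- on generators, brackets are given by products of matrices
  have bracket : ∀ (x y : Module.End F V) (α α' : Matrix (Fin n) (Fin m) F)
      (β β' : Matrix (Fin m) (Fin n) F), Commute e x → Commute e y →
      (∀ j, x (p j) = ∑ k, α k j • q k) → (∀ k, x (q k) = ∑ j, β j k • e (p j)) →
      (∀ j, y (p j) = ∑ k, α' k j • q k) → (∀ k, y (q k) = ∑ j, β' j k • e (p j)) →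
      ⁅x, y⁆ = Φ (β * α' - β' * α, α * β' - α' * β) := by
    intro x y α α' β β' hx hy hxp hxq hyp hyq
    obtain ⟨h1, h2, h3⟩ := hΦ (β * α' - β' * α, α * β' - α' * β)
    have swap : ∀ z : Module.End F V, Commute e z → ∀ v, z (e v) = e (z v) := fun z hz v =>
      (congrArg (fun t => t v) hz.eq).symm
    rw [Ring.lie_def]
    refine ext_gen hbp hbq ((hx.mul_right hy).sub_right (hy.mul_right hx)) h1
      (fun j => ?_) (fun k => ?_)
    · rw [h2]
      simp only [LinearMap.sub_apply, Module.End.mul_apply, hxp, hyp, map_sum, map_smul, hxq, hyq,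
        Matrix.sub_apply, sub_smul, Finset.sum_sub_distrib]
      rw [sum_mul, sum_mul]
    · rw [h3]
      simp only [LinearMap.sub_apply, Module.End.mul_apply, hxq, hyq, map_sum, map_smul,
        swap x hx, swap y hy, hxp, hyp, Matrix.sub_apply, sub_smul, Finset.sum_sub_distrib]
      rw [sum_mul, sum_mul]
  have g1_comm : ∀ x ∈ g1e, Commute e x := fun x hx => by
    rw [hg1e] at hx; exact (comm x).1 hx.2
  have SΦ : S = (oddBrackets F m n).map Φ := by
    rw [hS, oddBrackets, Submodule.map_span]
    congr 1
    ext z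
    constructor
    · rintro ⟨x, hx, y, hy, rfl⟩
      obtain ⟨α, β, h1, h2⟩ := g1_to x hx
      obtain ⟨α', β', h3, h4⟩ := g1_to y hy
      exact ⟨_, ⟨α, α', β, β', rfl⟩,
        (bracket x y α α' β β' (g1_comm x hx) (g1_comm y hy) h1 h2 h3 h4).symm⟩
    · rintro ⟨_, ⟨α, α', β, β', rfl⟩, rfl⟩
      obtain ⟨x, hx, h1, h2⟩ := g1_of α β
      obtain ⟨y, hy, h3, h4⟩ := g1_of α' β'
      exact ⟨x, hx, y, hy,
        (bracket x y α α' β β' (g1_comm x hx) (g1_comm y hy) h1 h2 h3 h4).symm⟩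
  have Sle : S ≤ g2e := by
    rw [SΦ, ← rangeΦ]; exact LinearMap.map_le_range
  refine ⟨fun hd => le_antisymm Sle ?_, fun hd => ⟨Sle, ?_⟩⟩
  · -- for `d = 1` the second block acts by zero, so the missing direction is killed by `Φ`
    subst hd
    rw [← rangeΦ]
    rintro _ ⟨⟨X, Y⟩, rfl⟩
    have hz : ∀ Y, Φ (0, Y) = 0 := fun Y => by
      obtain ⟨h1, h2, h3⟩ := hΦ (0, Y)
      refine ext_gen hbp hbq h1 (Commute.zero_right e) (fun j => ?_) (fun k => ?_)
      · rw [h2]; simp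
      · rw [h3]
        have : ∀ k, e (q k) = 0 := fun k => by simpa using hqd k
        simp [this]
    have := Submodule.mem_map_of_mem (f := Φ)
      (matrix_reduce (⟨0, hn⟩ : Fin n) (⟨0, hm⟩ : Fin m) _ mem_oddBrackets X Y)
    rw [map_sub, map_smul, hz, smul_zero, sub_zero] at this
    rwa [SΦ]
  · have inj : Function.Injective Φ := by
      rw [injective_iff_map_eq_zero]
      rintro ⟨X, Y⟩ h0
      obtain ⟨-, h2, h3⟩ := hΦ (X, Y)
      have lp : LinearIndependent F fun j => e (p j) := by
        have := b.linearIndependent.comp (fun j => Sum.inl (j, (⟨1, by omega⟩ : Fin (d + 1))))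
          (fun i j hij => by simpa using hij)
        convert this using 2 with j
        simp [hbp]
      have lq : LinearIndependent F fun k => e (q k) := by
        have := b.linearIndependent.comp (fun k => Sum.inr (k, (⟨1, by omega⟩ : Fin d)))
          (fun i j hij => by simpa using hij)
        convert this using 2 with j
        simp [hbq]
      refine Prod.ext ?_ ?_
      · ext i j
        refine Fintype.linearIndependent_iff.1 lp (fun i => X i j) ?_ i
        rw [← h2, h0]; rfl
      · ext i j
        refine Fintype.linearIndependent_iff.1 lq (fun i => Y i j) ?_ i
        rw [← h3, h0]; rfl
    rw [SΦ, ← rangeΦ, ← (Submodule.equivMapOfInjective Φ inj _).finrank_eq,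
      LinearMap.finrank_range_of_inj inj, finrank_oddBrackets hm hn]
end

section
/- Let F be an algebraically closed field of characteristic 0, V a finite-dimensional F-vector space, and ĝ = gl(V) = End(V). Let d ≥ 1 and m, n ≥ 1, and let e ∈ ĝ be nilpotent with Jordan type ((d+1)^m, d^n), i.e., e^{d+1} = 0, rank(e^d) = m, dim ker(e) = m + n, and dim V = m(d+1) + nd. Let (e, h, f) be an sl2-triple in ĝ. Then there exist x, y ∈ End(V) with e = x + y, x∘y = y∘x = 0, x^d = 0, y^{d+1} = 0, and rank(y^d) = m, such that m·x - n·y ∈ [ĝ(1)_e, ĝ(1)_e]. -/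
/-!
Every power of `e` satisfies `e^(k+1) f - f e^(k+1) = (k+1) (h - k) e^k`. Applied with `k = d`, it shows
that `h` acts by `d` on `range e^d`. The rank conditions force `ker e ≤ range e^(d-1)`, and the
identity with `k = d - 1` then shows that `h - (d-1)` maps `ker e` into `range e^d`. Hence `ker e` is the
direct sum of the `h`-eigenspaces for `d` (which is `range e^d`, of dimension `m`) and for `d - 1` (of
dimension `n`); no complete reducibility is needed. Pulling bases of these eigenspaces back along
`e^d` and `e^(d-1)` with the help of `f` gives lowest weight vectors `w j` and `v k` whose `e`-strings
span `V` (`exists_strings`), hence form a basis by counting.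

An operator commuting with `e` is determined by its values on the `w j` and `v k` (`endo_ext`), and
these values can be prescribed freely, as long as those at the `v k` lie in `ker e^d` (`exists_endo`).
With `x` given by `w j ↦ 0`, `v k ↦ e (v k)`, `y` by `w j ↦ e (w j)`, `v k ↦ 0`, and the
weight-one operators `a j k : v k ↦ e (w j)`, `b j k : w j ↦ v k`, the sum of all `⁅b j k, a j k⁆`
is `m x - n y`.
-/

open Module

namespace TwoBlock

/-! ### Commutation relations of an sl₂-triple -/

section Sl2

variable {F V : Type*} [Field F] [AddCommGroup V] [Module F V] {e h f : Module.End F V}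

theorem h_mul_e (t1 : ⁅h, e⁆ = (2 : F) • e) : h * e = e * h + (2 : F) • e := by
  rw [← t1, Ring.lie_def]; abel

theorem h_e_apply (t1 : ⁅h, e⁆ = (2 : F) • e) (z : V) : h (e z) = e (h z) + (2 : F) • e z := by
  simpa using congrArg (fun g : Module.End F V => g z) (h_mul_e t1)

theorem h_f_apply (t2 : ⁅h, f⁆ = (-2 : F) • f) (z : V) : h (f z) = f (h z) - (2 : F) • f z := by
  have := congrArg (fun g : Module.End F V => g z) t2
  simp only [Ring.lie_def, LinearMap.sub_apply, Module.End.mul_apply, LinearMap.smul_apply] at this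
  rw [sub_eq_iff_eq_add] at this
  rw [this]; module

theorem e_f_apply (t3 : ⁅e, f⁆ = h) (z : V) : e (f z) = f (e z) + h z := by
  have := congrArg (fun g : Module.End F V => g z) t3
  simp only [Ring.lie_def, LinearMap.sub_apply, Module.End.mul_apply] at this
  rw [← this]; abel

theorem h_e_pow_apply (t1 : ⁅h, e⁆ = (2 : F) • e) (k : ℕ) (z : V) :
    h ((e ^ k) z) = (e ^ k) (h z) + (2 * k : F) • (e ^ k) z := by
  induction k with
  | zero => simp
  | succ k ih =>
    rw [pow_succ', Module.End.mul_apply, Module.End.mul_apply, h_e_apply t1, ih]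
    simp only [map_add, map_smul]
    push_cast; module

/-- `[e^(k+1), f] = (k+1) (h - k) e^k`, the identity that pins down `h` on `ker e`. -/
theorem e_pow_f_apply (t1 : ⁅h, e⁆ = (2 : F) • e) (t3 : ⁅e, f⁆ = h) (k : ℕ) (z : V) :
    (e ^ (k + 1)) (f z) = f ((e ^ (k + 1)) z)
      + ((k + 1 : F)) • (h ((e ^ k) z) - (k : F) • (e ^ k) z) := by
  induction k with
  | zero => simp [e_f_apply t3]
  | succ k ih =>
    rw [pow_succ', Module.End.mul_apply, ih]
    simp only [map_add, map_smul, map_sub, e_f_apply t3, pow_succ' e k,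
      Module.End.mul_apply, h_e_apply t1]
    push_cast; module

theorem h_f_pow_apply (t2 : ⁅h, f⁆ = (-2 : F) • f) {l : F} {u : V} (hu : h u = l • u) (k : ℕ) :
    h ((f ^ k) u) = (l - 2 * k) • (f ^ k) u := by
  induction k with
  | zero => simp [hu]
  | succ k ih =>
    rw [pow_succ', Module.End.mul_apply, h_f_apply t2, ih]
    simp only [map_smul]
    push_cast; module

theorem e_f_pow_apply (t2 : ⁅h, f⁆ = (-2 : F) • f) (t3 : ⁅e, f⁆ = h) {l : F} {u : V}
    (hu : h u = l • u) (eu : e u = 0) (k : ℕ) :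
    e ((f ^ (k + 1)) u) = ((k + 1) * (l - k)) • (f ^ k) u := by
  induction k with
  | zero => simp [e_f_apply t3, eu, hu]
  | succ k ih =>
    rw [pow_succ', Module.End.mul_apply, e_f_apply t3, ih, h_f_pow_apply t2 hu]
    simp only [map_smul, pow_succ' f k, Module.End.mul_apply]
    push_cast; module

/-- A highest weight vector of weight `l` is `e^l` of a vector of weight `-l`. -/
theorem exists_lowest [CharZero F] (t2 : ⁅h, f⁆ = (-2 : F) • f) (t3 : ⁅e, f⁆ = h) (l : ℕ) {u : V}
    (hu : h u = (l : F) • u) (eu : e u = 0) :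
    ∃ w, (e ^ l) w = u ∧ h w = (-l : F) • w := by
  have key : ∀ k ≤ l, ∃ c : F, c ≠ 0 ∧ (e ^ k) ((f ^ k) u) = c • u := by
    intro k
    induction k with
    | zero => exact fun _ => ⟨1, one_ne_zero, by simp⟩
    | succ k ih =>
      intro hk
      obtain ⟨c, hc, h1⟩ := ih (by omega)
      refine ⟨((k + 1) * ((l : F) - k)) * c, ?_, ?_⟩
      · have h2 : (l : F) - k ≠ 0 := by
          rw [sub_ne_zero]; exact_mod_cast (by omega : l ≠ k)
        exact mul_ne_zero (mul_ne_zero (by exact_mod_cast Nat.succ_ne_zero k) h2) hc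
      · rw [pow_succ e k, Module.End.mul_apply, e_f_pow_apply t2 t3 hu eu, map_smul, h1, smul_smul]
  obtain ⟨c, hc, h1⟩ := key l le_rfl
  refine ⟨c⁻¹ • (f ^ l) u, ?_, ?_⟩
  · rw [map_smul, h1, smul_smul, inv_mul_cancel₀ hc, one_smul]
  · rw [map_smul, h_f_pow_apply t2 hu]
    module

/-- Operators commuting with `e` are determined by their values on generators of the strings. -/
theorem endo_ext {m n : ℕ} {w : Fin m → V} {v : Fin n → V}
    (hgen : ∀ S : Submodule F V, (∀ z ∈ S, e z ∈ S) → (∀ j, w j ∈ S) → (∀ k, v k ∈ S) → S = ⊤)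
    {s t : Module.End F V} (hs : Commute e s) (ht : Commute e t)
    (hw : ∀ j, s (w j) = t (w j)) (hv : ∀ k, s (v k) = t (v k)) : s = t := by
  have := hgen (LinearMap.eqLocus s t) (fun z hz => ?_) hw hv
  · ext z
    have h1 : z ∈ LinearMap.eqLocus s t := by rw [this]; trivial
    exact h1
  · have h1 := LinearMap.congr_fun hs.eq z
    have h2 := LinearMap.congr_fun ht.eq z
    simp only [Module.End.mul_apply] at h1 h2
    have h3 : s z = t z := hz
    change s (e z) = t (e z)
    rw [← h1, ← h2, h3]

/-- Weight one may be checked on the generators of the strings. -/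
theorem weight_one {m n : ℕ} {w : Fin m → V} {v : Fin n → V}
    (t1 : ⁅h, e⁆ = (2 : F) • e)
    (hgen : ∀ S : Submodule F V, (∀ z ∈ S, e z ∈ S) → (∀ j, w j ∈ S) → (∀ k, v k ∈ S) → S = ⊤)
    {t : Module.End F V} (ht : Commute e t)
    (hw : ∀ j, h (t (w j)) - t (h (w j)) = t (w j))
    (hv : ∀ k, h (t (v k)) - t (h (v k)) = t (v k)) :
    ⁅h, t⁆ = (1 : F) • t ∧ ⁅e, t⁆ = 0 := by
  have h0 : ⁅e, t⁆ = 0 := ht.lie_eq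
  refine ⟨?_, h0⟩
  rw [one_smul]
  refine endo_ext hgen ?_ ht hw hv
  have h1 : e * h = h * e - (2 : F) • e := by rw [h_mul_e t1]; abel
  have h2 : e * t = t * e := ht.eq
  change e * (h * t - t * h) = (h * t - t * h) * e
  rw [mul_sub, sub_mul, ← mul_assoc, ← mul_assoc, h1, h2, sub_mul, mul_assoc t e h, h1, mul_sub,
    smul_mul_assoc, mul_smul_comm, h2, mul_assoc h e t, h2]
  simp only [mul_assoc]
  abel

end Sl2

/-! ### The string basis -/

section Strings

variable {F V : Type*} [Field F] [AddCommGroup V] [Module F V] [FiniteDimensional F V]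

/-- Rank-nullity for `e` restricted to `range e^k`. -/
theorem finrank_range_pow (e : Module.End F V) (k : ℕ) :
    finrank F (LinearMap.range (e ^ k)) = finrank F (LinearMap.range (e ^ (k + 1)))
      + finrank F (LinearMap.ker e ⊓ LinearMap.range (e ^ k) : Submodule F V) := by
  have h1 := LinearMap.finrank_range_add_finrank_ker (e.domRestrict (LinearMap.range (e ^ k)))
  rw [← h1, LinearMap.range_domRestrict, ← LinearMap.range_comp, LinearMap.ker_domRestrict,
    pow_succ' e k]
  congr 1
  rw [← Submodule.finrank_map_subtype_eq, Submodule.map_comap_subtype, inf_comm]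

/-- Blocks of size less than `d` are excluded by the dimension count. -/
theorem ker_le_range {q m n : ℕ} (e : Module.End F V)
    (he2 : finrank F (LinearMap.range (e ^ (q + 1))) = m)
    (he3 : finrank F (LinearMap.ker e) = m + n)
    (he4 : finrank F V = m * (q + 1 + 1) + n * (q + 1)) :
    LinearMap.ker e ≤ LinearMap.range (e ^ q) := by
  have step : ∀ k, finrank F V ≤ finrank F (LinearMap.range (e ^ k)) + k * (m + n) := by
    intro k
    induction k with
    | zero => rw [pow_zero, Module.End.one_eq_id, LinearMap.range_id, finrank_top]; simp
    | succ k ih =>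
      have h1 := finrank_range_pow e k
      have h2 := Submodule.finrank_mono
        (inf_le_left : LinearMap.ker e ⊓ LinearMap.range (e ^ k) ≤ LinearMap.ker e)
      rw [add_mul]
      omega
  have h1 := step q
  have h2 := finrank_range_pow e q
  have h3 : finrank F (LinearMap.ker e) ≤
      finrank F (LinearMap.ker e ⊓ LinearMap.range (e ^ q) : Submodule F V) := by
    rw [he4, h2, he2] at h1
    rw [he3]
    nlinarith
  exact inf_eq_left.1 (Submodule.eq_of_le_of_finrank_le inf_le_left h3)

/-- Lowest weight vectors of all blocks: their `e`-strings span `V`. -/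
theorem exists_strings [CharZero F] {q m n : ℕ} {e h f : Module.End F V}
    (he1 : e ^ (q + 1 + 1) = 0)
    (he2 : finrank F (LinearMap.range (e ^ (q + 1))) = m)
    (he3 : finrank F (LinearMap.ker e) = m + n)
    (he4 : finrank F V = m * (q + 1 + 1) + n * (q + 1))
    (t1 : ⁅h, e⁆ = (2 : F) • e) (t2 : ⁅h, f⁆ = (-2 : F) • f) (t3 : ⁅e, f⁆ = h) :
    ∃ (w : Fin m → V) (v : Fin n → V),
      (∀ j, h (w j) = (-(q + 1 : ℕ) : F) • w j) ∧ (∀ k, h (v k) = (-q : F) • v k) ∧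
      (∀ k, (e ^ (q + 1)) (v k) = 0) ∧
      ∀ S : Submodule F V, (∀ z ∈ S, e z ∈ S) → (∀ j, w j ∈ S) → (∀ k, v k ∈ S) → S = ⊤ := by
  have hker := ker_le_range e he2 he3 he4
  have hRk : LinearMap.range (e ^ (q + 1)) ≤ LinearMap.ker e := by
    rintro _ ⟨z, rfl⟩
    rw [LinearMap.mem_ker, ← Module.End.mul_apply, ← pow_succ', he1]; rfl
  have hR : ∀ u ∈ LinearMap.range (e ^ (q + 1)), h u = ((q + 1 : ℕ) : F) • u := by
    rintro _ ⟨z, rfl⟩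
    have h1 := e_pow_f_apply t1 t3 (q + 1) z
    rw [he1] at h1
    simp only [LinearMap.zero_apply, map_zero, zero_add] at h1
    rcases smul_eq_zero.1 h1.symm with h2 | h2
    · exact absurd h2 (by exact_mod_cast Nat.succ_ne_zero (q + 1))
    · exact sub_eq_zero.1 h2
  have hK : ∀ u ∈ LinearMap.ker e, h u - (q : F) • u ∈ LinearMap.range (e ^ (q + 1)) := by
    intro u hu
    obtain ⟨z, rfl⟩ := hker hu
    have h1 := e_pow_f_apply t1 t3 q z
    rw [pow_succ' e q, Module.End.mul_apply, Module.End.mul_apply, LinearMap.mem_ker.1 hu,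
      map_zero, zero_add, ← Module.End.mul_apply, ← pow_succ'] at h1
    have h0 : (q + 1 : F) ≠ 0 := by exact_mod_cast Nat.succ_ne_zero q
    refine ⟨(q + 1 : F)⁻¹ • f z, ?_⟩
    rw [map_smul, h1, smul_smul, inv_mul_cancel₀ h0, one_smul]
  set R := LinearMap.range (e ^ (q + 1)) with hRdef
  set Q := LinearMap.ker e ⊓ LinearMap.ker (h - (q : F) • (1 : Module.End F V)) with hQdef
  have hQ : ∀ u ∈ Q, h u = (q : F) • u := by
    intro u hu
    simpa [sub_eq_zero] using LinearMap.mem_ker.1 hu.2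
  have hdis : R ⊓ Q = ⊥ := by
    rw [eq_bot_iff]
    rintro u ⟨h1, h2⟩
    have h3 := (hR u h1).symm.trans (hQ u h2)
    rw [← sub_eq_zero, ← sub_smul] at h3
    simpa using h3
  have hsup : R ⊔ Q = LinearMap.ker e := by
    apply le_antisymm (sup_le hRk inf_le_left)
    intro u hu
    -- `u = (h - q) u + (u - (h - q) u)`, and the second summand has weight `q`.
    have h1 := hK u hu
    have h2 := hR _ h1
    have h3 : u - (h u - (q : F) • u) ∈ Q := by
      refine ⟨sub_mem hu (hRk h1), ?_⟩
      change (h - (q : F) • (1 : Module.End F V)) _ = 0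
      simp only [LinearMap.sub_apply, LinearMap.smul_apply, Module.End.one_apply]
      rw [map_sub, h2]
      push_cast; module
    have := Submodule.add_mem_sup h1 h3
    simpa using this
  have hQn : finrank F Q = n := by
    have := Submodule.finrank_sup_add_finrank_inf_eq R Q
    rw [hdis, hsup, finrank_bot, he3, he2] at this
    omega
  let bR := Module.finBasisOfFinrankEq F R he2
  let bQ := Module.finBasisOfFinrankEq F Q hQn
  choose w hw1 hw2 using fun j => exists_lowest t2 t3 (q + 1) (hR _ (bR j).2) (hRk (bR j).2)
  choose v hv1 hv2 using fun k => exists_lowest t2 t3 q (hQ _ (bQ k).2) (bQ k).2.1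
  refine ⟨w, v, hw2, hv2, ?_, ?_⟩
  · intro k
    rw [pow_succ', Module.End.mul_apply, hv1]
    exact (bQ k).2.1
  intro S hS hwS hvS
  have hSk : ∀ k, ∀ z ∈ S, (e ^ k) z ∈ S := by
    intro k z hz
    induction k with
    | zero => simpa using hz
    | succ k ih => rw [pow_succ', Module.End.mul_apply]; exact hS _ ih
  have hRS : R ≤ S.map (e ^ (q + 1)) := by
    intro u hu
    have h1 : (⟨u, hu⟩ : R) ∈ Submodule.span F (Set.range bR) := by rw [bR.span_eq]; trivial
    have h2 : Submodule.span F (Set.range bR) ≤ (S.map (e ^ (q + 1))).comap R.subtype := by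
      rw [Submodule.span_le]
      rintro _ ⟨j, rfl⟩
      exact ⟨w j, hwS j, hw1 j⟩
    exact h2 h1
  have hQS : Q ≤ S.map (e ^ q) := by
    intro u hu
    have h1 : (⟨u, hu⟩ : Q) ∈ Submodule.span F (Set.range bQ) := by rw [bQ.span_eq]; trivial
    have h2 : Submodule.span F (Set.range bQ) ≤ (S.map (e ^ q)).comap Q.subtype := by
      rw [Submodule.span_le]
      rintro _ ⟨j, rfl⟩
      exact ⟨v j, hvS j, hv1 j⟩
    exact h2 h1
  have hmono : ∀ i k, S.map (e ^ (i + k)) ≤ S.map (e ^ i) := by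
    rintro i k _ ⟨s, hs, rfl⟩
    exact ⟨(e ^ k) s, hSk k s hs, by rw [← Module.End.mul_apply, ← pow_add]⟩
  have hkerS : ∀ k ≤ q + 2, LinearMap.ker (e ^ k) ≤ S := by
    intro k
    induction k with
    | zero =>
      intro _ z hz
      have : z = 0 := by simpa using hz
      rw [this]; exact S.zero_mem
    | succ k ih =>
      intro hk z hz
      have h1 : (e ^ k) z ∈ S.map (e ^ k) := by
        rcases Nat.lt_or_ge q k with hlt | hle
        · obtain rfl : k = q + 1 := by omega
          exact hRS ⟨z, rfl⟩
        · obtain ⟨i, rfl⟩ := Nat.exists_eq_add_of_le hle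
          have h2 : (e ^ k) z ∈ LinearMap.ker e := by
            rw [LinearMap.mem_ker, ← Module.End.mul_apply, ← pow_succ']; exact hz
          rw [← hsup] at h2
          refine (sup_le (hRS.trans ?_) (hQS.trans ?_)) h2
          · rw [add_assoc]; exact hmono k (i + 1)
          · exact hmono k i
      obtain ⟨s, hs, h3⟩ := h1
      have h4 : z - s ∈ S := ih (by omega) (by rw [LinearMap.mem_ker, map_sub, h3, sub_self])
      simpa using S.add_mem h4 hs
  rw [eq_top_iff]
  intro z _
  exact hkerS (q + 2) le_rfl (by rw [LinearMap.mem_ker, he1]; rfl)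

/-- Values on the generators of the strings extend to an operator commuting with `e`; the strings
form a basis because they span and their lengths add up to `dim V`. -/
theorem exists_endo {d m n : ℕ} {e : Module.End F V} {w : Fin m → V} {v : Fin n → V}
    (he1 : e ^ (d + 1) = 0) (hv0 : ∀ k, (e ^ d) (v k) = 0)
    (he4 : finrank F V = m * (d + 1) + n * d)
    (hgen : ∀ S : Submodule F V, (∀ z ∈ S, e z ∈ S) → (∀ j, w j ∈ S) → (∀ k, v k ∈ S) → S = ⊤)
    (α : Fin m → V) (β : Fin n → V) (hβ : ∀ k, (e ^ d) (β k) = 0) :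
    ∃ t : Module.End F V, Commute e t ∧ (∀ j, t (w j) = α j) ∧ ∀ k, t (v k) = β k := by
  let g : (Fin m × Fin (d + 1)) ⊕ (Fin n × Fin d) → V :=
    Sum.elim (fun p => (e ^ (p.2 : ℕ)) (w p.1)) (fun p => (e ^ (p.2 : ℕ)) (v p.1))
  have hwm : ∀ j i, (e ^ i) (w j) ∈ Submodule.span F (Set.range g) := by
    intro j i
    by_cases hi : i < d + 1
    · exact Submodule.subset_span ⟨Sum.inl (j, ⟨i, hi⟩), rfl⟩
    · rw [pow_eq_zero_of_le (by omega) he1]; exact Submodule.zero_mem _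
  have hvz : ∀ (z : V), (e ^ d) z = 0 → ∀ i, d ≤ i → (e ^ i) z = 0 := by
    intro z hz i hi
    obtain ⟨r, rfl⟩ := Nat.exists_eq_add_of_le hi
    rw [add_comm, pow_add, Module.End.mul_apply, hz, map_zero]
  have hvm : ∀ k i, (e ^ i) (v k) ∈ Submodule.span F (Set.range g) := by
    intro k i
    by_cases hi : i < d
    · exact Submodule.subset_span ⟨Sum.inr (k, ⟨i, hi⟩), rfl⟩
    · rw [hvz _ (hv0 k) i (by omega)]; exact Submodule.zero_mem _
  have htop : Submodule.span F (Set.range g) = ⊤ := by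
    refine hgen _ ?_ (fun j => by simpa using hwm j 0) (fun k => by simpa using hvm k 0)
    have : Submodule.span F (Set.range g) ≤ (Submodule.span F (Set.range g)).comap e := by
      rw [Submodule.span_le]
      rintro _ ⟨⟨j, i⟩ | ⟨k, i⟩, rfl⟩
      · simpa [g, pow_succ'] using hwm j (i + 1)
      · simpa [g, pow_succ'] using hvm k (i + 1)
    exact this
  let b := basisOfTopLeSpanOfCardEqFinrank g htop.ge (by simp [he4])
  have hb : ∀ i, b i = g i := fun i => by simp [b]
  let t : Module.End F V := b.constr F
    (Sum.elim (fun p => (e ^ (p.2 : ℕ)) (α p.1)) (fun p => (e ^ (p.2 : ℕ)) (β p.1)))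
  have htw : ∀ j i, t ((e ^ i) (w j)) = (e ^ i) (α j) := by
    intro j i
    by_cases hi : i < d + 1
    · have := b.constr_basis F
        (Sum.elim (fun p => (e ^ (p.2 : ℕ)) (α p.1)) (fun p => (e ^ (p.2 : ℕ)) (β p.1)))
        (Sum.inl (j, ⟨i, hi⟩))
      rw [hb] at this
      exact this
    · rw [pow_eq_zero_of_le (by omega) he1]; simp
  have htv : ∀ k i, t ((e ^ i) (v k)) = (e ^ i) (β k) := by
    intro k i
    by_cases hi : i < d
    · have := b.constr_basis F
        (Sum.elim (fun p => (e ^ (p.2 : ℕ)) (α p.1)) (fun p => (e ^ (p.2 : ℕ)) (β p.1)))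
        (Sum.inr (k, ⟨i, hi⟩))
      rw [hb] at this
      exact this
    · rw [hvz _ (hv0 k) i (by omega), hvz _ (hβ k) i (by omega), map_zero]
  refine ⟨t, ?_, fun j => by simpa using htw j 0, fun k => by simpa using htv k 0⟩
  refine b.ext fun i => ?_
  rw [hb, Module.End.mul_apply, Module.End.mul_apply]
  rcases i with ⟨j, i⟩ | ⟨k, i⟩
  · change e (t ((e ^ (i : ℕ)) (w j))) = t (e ((e ^ (i : ℕ)) (w j)))
    rw [htw, ← Module.End.mul_apply e, ← Module.End.mul_apply e, ← pow_succ', htw]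
  · change e (t ((e ^ (i : ℕ)) (v k))) = t (e ((e ^ (i : ℕ)) (v k)))
    rw [htv, ← Module.End.mul_apply e, ← Module.End.mul_apply e, ← pow_succ', htv]

end Strings

end TwoBlock

open TwoBlock

/-! ### The central element as a sum of commutators -/

/-- For nilpotent `e ∈ gl(V)` of Jordan type `((d+1)^m, d^n)` with decomposition
`e = e_d + e_{d+1}` into the parts on blocks of size `d` and `d+1`, the element
`m·e_d - n·e_{d+1}` lies in `[ĝ(1)_e, ĝ(1)_e]`. -/
theorem two_block_central_element_gl
    (F : Type*) [Field F] [IsAlgClosed F] [CharZero F]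
    (V : Type*) [AddCommGroup V] [Module F V] [FiniteDimensional F V]
    (d m n : ℕ) (hd1 : 1 ≤ d) (hm : 1 ≤ m) (hn : 1 ≤ n)
    (e h f : Module.End F V)
    (he1 : e ^ (d + 1) = 0)
    (he2 : finrank F (LinearMap.range (e ^ d)) = m)
    (he3 : finrank F (LinearMap.ker e) = m + n)
    (he4 : finrank F V = m * (d + 1) + n * d)
    (t1 : ⁅h, e⁆ = (2 : F) • e) (t2 : ⁅h, f⁆ = (-2 : F) • f) (t3 : ⁅e, f⁆ = h)
    (g1e : Set (Module.End F V))
    (hg1e : g1e = {z : Module.End F V | ⁅h, z⁆ = (1 : F) • z ∧ ⁅e, z⁆ = 0}) :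
    ∃ x y : Module.End F V,
      e = x + y ∧ x * y = 0 ∧ y * x = 0 ∧
      x ^ d = 0 ∧ y ^ (d + 1) = 0 ∧
      finrank F (LinearMap.range (y ^ d)) = m ∧
      (m : F) • x - (n : F) • y ∈
        Submodule.span F {z : Module.End F V | ∃ a ∈ g1e, ∃ b ∈ g1e, z = ⁅a, b⁆} := by
  subst hg1e
  obtain ⟨q, rfl⟩ : ∃ q, d = q + 1 := ⟨d - 1, by omega⟩
  obtain ⟨w, v, hw, hv, hv0, hgen⟩ := exists_strings he1 he2 he3 he4 t1 t2 t3
  have ex := exists_endo he1 hv0 he4 hgen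
  have hew : ∀ z, (e ^ (q + 1)) (e z) = 0 := fun z => by
    rw [← Module.End.mul_apply, ← pow_succ, he1]; rfl
  obtain ⟨x, hxe, hxw, hxv⟩ := ex 0 (fun k => e (v k)) (fun k => hew _)
  obtain ⟨y, hye, hyw, hyv⟩ := ex (fun j => e (w j)) 0 (fun k => by simp)
  choose a hae haw hav using fun (j : Fin m) (k : Fin n) =>
    ex 0 (Pi.single k (e (w j))) (fun k' => by
      by_cases hk : k' = k
      · subst hk; simpa using hew _
      · simp [hk])
  choose b hbe hbw hbv using fun (j : Fin m) (k : Fin n) =>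
    ex (Pi.single j (v k)) 0 (fun k => by simp)
  have eapp : ∀ {s : Module.End F V}, Commute e s → ∀ z, s (e z) = e (s z) := fun hs z =>
    (LinearMap.congr_fun hs.eq z).symm
  have xw : ∀ i j, (x ^ (i + 1)) (w j) = 0 := fun i j => by
    rw [pow_succ, Module.End.mul_apply, hxw]; simp
  have yv : ∀ i k, (y ^ (i + 1)) (v k) = 0 := fun i k => by
    rw [pow_succ, Module.End.mul_apply, hyv]; simp
  have xv : ∀ i k, (x ^ i) (v k) = (e ^ i) (v k) := by
    intro i k
    induction i with
    | zero => rfl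
    | succ i ih =>
      rw [pow_succ', Module.End.mul_apply, ih,
        ← Module.End.mul_apply, ← (hxe.pow_left i).eq, Module.End.mul_apply, hxv,
        ← Module.End.mul_apply, ← pow_succ]
  have yw : ∀ i j, (y ^ i) (w j) = (e ^ i) (w j) := by
    intro i k
    induction i with
    | zero => rfl
    | succ i ih =>
      rw [pow_succ', Module.End.mul_apply, ih,
        ← Module.End.mul_apply, ← (hye.pow_left i).eq, Module.End.mul_apply, hyw,
        ← Module.End.mul_apply, ← pow_succ]
  have hyd : y ^ (q + 1) = e ^ (q + 1) :=
    endo_ext hgen (hye.pow_right _) ((Commute.refl e).pow_right _) (yw _)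
      (fun k => by rw [yv, hv0])
  refine ⟨x, y, ?_, ?_, ?_, ?_, ?_, ?_, ?_⟩
  · exact endo_ext hgen (Commute.refl e) (hxe.add_right hye) (fun j => by simp [hxw, hyw])
      (fun k => by simp [hxv, hyv])
  · exact endo_ext hgen (hxe.mul_right hye) (Commute.zero_right e)
      (fun j => by simp [hyw, eapp hxe, hxw]) (fun k => by simp [hyv])
  · exact endo_ext hgen (hye.mul_right hxe) (Commute.zero_right e)
      (fun j => by simp [hxw]) (fun k => by simp [hxv, eapp hye, hyv])
  · exact endo_ext hgen (hxe.pow_right _) (Commute.zero_right e)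
      (fun j => by rw [xw]; rfl) (fun k => by rw [xv, hv0]; rfl)
  · exact endo_ext hgen (hye.pow_right _) (Commute.zero_right e)
      (fun j => by rw [yw, he1]) (fun k => by rw [yv]; rfl)
  · rw [hyd, he2]
  · have ha : ∀ j k, ⁅h, a j k⁆ = (1 : F) • a j k ∧ ⁅e, a j k⁆ = 0 := by
      intro j k
      refine weight_one t1 hgen (hae j k) (fun j' => ?_) (fun k' => ?_)
      · simp [haw, hw]
      · rw [hv, map_smul, hav]
        by_cases hk : k' = k
        · subst hk
          simp only [Pi.single_eq_same]
          rw [h_e_apply t1, hw, map_smul]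
          push_cast; module
        · simp [hk]
    have hb : ∀ j k, ⁅h, b j k⁆ = (1 : F) • b j k ∧ ⁅e, b j k⁆ = 0 := by
      intro j k
      refine weight_one t1 hgen (hbe j k) (fun j' => ?_) (fun k' => ?_)
      · rw [hw, map_smul, hbw]
        by_cases hj : j' = j
        · subst hj
          simp only [Pi.single_eq_same]
          rw [hv]
          push_cast; module
        · simp [hj]
      · simp [hbv, hv]
    have hsum : (m : F) • x - (n : F) • y = ∑ j, ∑ k, ⁅b j k, a j k⁆ := by
      refine endo_ext hgen ((hxe.smul_right _).sub_right (hye.smul_right _))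
        (Commute.sum_right _ _ _ fun j _ => Commute.sum_right _ _ _ fun k _ => ?_)
        (fun j' => ?_) (fun k' => ?_)
      · rw [Ring.lie_def]
        exact ((hbe j k).mul_right (hae j k)).sub_right ((hae j k).mul_right (hbe j k))
      · have : ∀ j k, ⁅b j k, a j k⁆ (w j') = if j' = j then - e (w j') else 0 := by
          intro j k
          rw [Ring.lie_def, LinearMap.sub_apply, Module.End.mul_apply, Module.End.mul_apply, haw,
            hbw]
          by_cases hj : j' = j
          · subst hj; simp [hav]
          · simp [hj]
        simp [LinearMap.sum_apply, this, hxw, hyw, Finset.sum_comm (s := (Finset.univ : Finset (Fin m))),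
          Nat.cast_smul_eq_nsmul]
      · have : ∀ j k, ⁅b j k, a j k⁆ (v k') = if k' = k then e (v k') else 0 := by
          intro j k
          rw [Ring.lie_def, LinearMap.sub_apply, Module.End.mul_apply, Module.End.mul_apply, hav,
            hbv]
          by_cases hk : k' = k
          · subst hk; simp [eapp (hbe _ _), hbw]
          · simp [hk]
        simp [LinearMap.sum_apply, this, hxv, hyv, Nat.cast_smul_eq_nsmul]
    rw [hsum]
    exact Submodule.sum_mem _ fun j _ => Submodule.sum_mem _ fun k _ =>
      Submodule.subset_span ⟨b j k, hb j k, a j k, ha j k, rfl⟩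
end

section
/- Let F be an algebraically closed field of characteristic 0, V a finite-dimensional F-vector space, B a nondegenerate bilinear form on V with B(v,w) = ε·B(w,v) for all v, w (ε = ±1), and g the Lie algebra of B-skew-adjoint endomorphisms of V. Let d ≥ 1 and m, n ≥ 1, and let e ∈ g be nilpotent with Jordan type ((d+1)^m, d^n), i.e., e^{d+1} = 0, rank(e^d) = m, dim ker(e) = m + n, and dim V = m(d+1) + nd. Let (e, h, f) be an sl2-triple in g. Then there exist B-skew-adjoint endomorphisms x, y ∈ g with e = x + y, x∘y = y∘x = 0, x^d = 0, y^{d+1} = 0, and rank(y^d) = m, such that m·x - n·y ∈ [g(1)_e, g(1)_e]. -/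
/-!
Write `d = D + 1`. Since the Jordan blocks of `e` have sizes `D + 1` and `D + 2` only, a dimension
count gives `ker (e ^ D) ≤ range e` (`ker_pow_le_range`). Together with `V = ker f ⊕ range e`
(`isCompl_ker_range`) this shows that `ker f` is the direct sum of the spaces `M` and `N` of lowest
weight vectors of weights `-(D + 1)` and `-D`, of dimensions `m` and `n`, and that a map commuting
with `e` is determined by its values on `M` and `N`. The complete reducibility of `sl₂`-modules is
not needed.

The forms `B (e ^ (D + 1) ·, ·)` on `M` and `B (e ^ D ·, ·)` on `N` are nondegenerate, one of them
symmetric and the other alternating. For `u ∈ M` and `w ∈ N` the alternating sum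
`raising u w = ∑ k, (-1) ^ k • (e ^ (D + 1 - k) u ∧ e ^ k w)` of skew-adjoint maps of rank at most
two is in `g(1)_e`: the commutator with `e` telescopes, and every term has weight `1`. It sends
`u' ∈ M` to `B (e ^ (D + 1) u, u') w` and `w' ∈ N` to `± B (e ^ D w, w') e u`.

Summing the commutators `[raising u w, raising u' w']` over dual pairs `(u, u')` in `M` and
`(w, w')` in `N` therefore produces an element `S ∈ [g(1)_e, g(1)_e]` which is `-2n • e` on `M` and
`2m • e` on `N` (`exists_central`); the opposite symmetries of the two forms make the two halves of
each commutator add up instead of cancelling. The part of `e` on the blocks of size `D + 1` is then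
`x = (S + 2n e) / (2 (m + n))`, the part on the blocks of size `D + 2` is
`y = (2m e - S) / (2 (m + n))`, and `m x - n y = S / 2`.
-/

open Module

namespace TwoBlock

/-! ### Relations in an `sl₂`-triple of endomorphisms -/

section Sl2

set_option linter.unusedSectionVars false
attribute [local instance] LieRing.ofAssociativeRing

variable {F V : Type*} [Field F] [CharZero F] [AddCommGroup V] [Module F V]
  {h e f : Module.End F V}

lemma isSl2Triple_of_commutators (he0 : e ≠ 0) (t1 : h * e - e * h = (2 : F) • e)
    (t2 : h * f - f * h = (-2 : F) • f) (t3 : e * f - f * e = h) : IsSl2Triple h e f := by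
  refine ⟨?_, t3, ?_, ?_⟩
  · rintro rfl
    rw [zero_mul, mul_zero, sub_zero, eq_comm, smul_eq_zero] at t1
    exact t1.elim two_ne_zero he0
  · rw [Ring.lie_def, t1, ← Nat.cast_smul_eq_nsmul F]
    norm_num
  · rw [Ring.lie_def, t2, ← Nat.cast_smul_eq_nsmul F, neg_smul]
    norm_num

lemma apply_e_f (t : IsSl2Triple h e f) (v : V) : e (f v) = f (e v) + h v := by
  have := LinearMap.congr_fun t.lie_e_f v
  rw [Ring.lie_def] at this
  simp only [LinearMap.sub_apply, Module.End.mul_apply] at this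
  rw [← this]; abel

lemma apply_h_e (t : IsSl2Triple h e f) (v : V) : h (e v) = e (h v) + (2 : F) • e v := by
  have := LinearMap.congr_fun (t.lie_h_e_smul F) v
  rw [Ring.lie_def] at this
  simp only [LinearMap.sub_apply, Module.End.mul_apply, LinearMap.smul_apply] at this
  rw [← this]; abel

lemma apply_h_e_pow (t : IsSl2Triple h e f) (k : ℕ) (v : V) :
    h ((e ^ k) v) = (e ^ k) (h v) + (2 * k : F) • (e ^ k) v := by
  induction k with
  | zero => simp
  | succ k ih =>
    rw [pow_succ', Module.End.mul_apply, Module.End.mul_apply, apply_h_e t, ih]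
    simp only [map_add, map_smul]
    push_cast
    module

/-- The commutator of `e ^ (k + 1)` with `f`. -/
lemma apply_e_pow_f (t : IsSl2Triple h e f) (k : ℕ) (v : V) :
    (e ^ (k + 1)) (f v) =
      f ((e ^ (k + 1)) v) + (k + 1 : F) • (e ^ k) (h v + (k : F) • v) := by
  induction k with
  | zero => simp [apply_e_f t]
  | succ k ih =>
    have hp (j : ℕ) (x : V) : e ((e ^ j) x) = (e ^ (j + 1)) x := by
      rw [pow_succ', Module.End.mul_apply]
    rw [← hp, ih, map_add, apply_e_f t, hp, apply_h_e_pow t]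
    simp only [map_add, map_smul, hp, smul_add]
    push_cast
    module

lemma exists_pow_e_pow_f (t : IsSl2Triple h e f) {v : V} {k : ℕ}
    (hv : t.HasPrimitiveVectorWith v (k : F)) (j : ℕ) (hj : j ≤ k) :
    ∃ c : F, c ≠ 0 ∧ (e ^ j) ((f ^ j) v) = c • v := by
  induction j with
  | zero => exact ⟨1, one_ne_zero, by simp⟩
  | succ j ih =>
    obtain ⟨c, hc, h1⟩ := ih (by omega)
    have h2 : e ((f ^ (j + 1)) v) = ((j + 1) * ((k : F) - j)) • (f ^ j) v :=
      hv.lie_e_pow_succ_toEnd_f j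
    refine ⟨((j + 1) * ((k : F) - j)) * c, mul_ne_zero (mul_ne_zero ?_ ?_) hc, ?_⟩
    · exact_mod_cast j.succ_ne_zero
    · rw [sub_ne_zero]
      exact_mod_cast (by omega : k ≠ j)
    · rw [pow_succ, Module.End.mul_apply, h2, map_smul, h1, smul_smul]

/-- If `e` is nilpotent, the kernel of `e` meets the range of `f` trivially. The induction
replaces `w` by `w - c⁻¹ f ^ k (e ^ k w)`: the vector `e ^ k w` is primitive of weight `k`, so this
does not change `f w`, and for a suitable `c` it lowers the nilpotency order of `w`. -/
lemma f_apply_eq_zero [FiniteDimensional F V] (t : IsSl2Triple h e f) (k : ℕ) (w : V)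
    (hw : (e ^ k) w = 0) (hef : e (f w) = 0) : f w = 0 := by
  induction k generalizing w with
  | zero => simp at hw; simp [hw]
  | succ k ih =>
    by_cases hz : (e ^ k) w = 0
    · exact ih w hz hef
    have h1 := apply_e_pow_f t k w
    rw [hw, map_zero, zero_add, pow_succ, Module.End.mul_apply, hef, map_zero] at h1
    have h2 : (e ^ k) (h w + (k : F) • w) = 0 :=
      (smul_eq_zero.mp h1.symm).resolve_left (by exact_mod_cast k.succ_ne_zero)
    have hp : t.HasPrimitiveVectorWith ((e ^ k) w) (k : F) := by
      refine ⟨hz, ?_, ?_⟩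
      · change h ((e ^ k) w) = _
        rw [apply_h_e_pow t]
        rw [map_add, map_smul] at h2
        rw [eq_neg_of_add_eq_zero_left h2]
        module
      · change e ((e ^ k) w) = 0
        rw [← Module.End.mul_apply, ← pow_succ', hw]
    obtain ⟨c, hc, h3⟩ := exists_pow_e_pow_f t hp k le_rfl
    have h4 : (f ^ (k + 1)) ((e ^ k) w) = 0 := hp.pow_toEnd_f_eq_zero_of_eq_nat rfl
    have h5 : f (w - c⁻¹ • (f ^ k) ((e ^ k) w)) = f w := by
      rw [map_sub, map_smul, ← Module.End.mul_apply f, ← pow_succ', h4]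
      simp
    rw [← h5]
    refine ih _ ?_ (by rw [h5, hef])
    rw [map_sub, map_smul, h3, smul_smul, inv_mul_cancel₀ hc, one_smul, sub_self]

/-- The nonzero powers of `f` would be eigenvectors of `ad h` for the distinct eigenvalues
`0, -2, -4, …`. -/
lemma isNilpotent_f [FiniteDimensional F V] (t : IsSl2Triple h e f) : IsNilpotent f := by
  by_contra hf
  have hne : ∀ k, f ^ k ≠ 0 := fun k hk => hf ⟨k, hk⟩
  have key : ∀ k : ℕ, h * f ^ k = f ^ k * h - (2 * k : F) • f ^ k := by
    intro k
    ext v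
    have := apply_h_e_pow t.symm k v
    simp only [LinearMap.neg_apply, map_neg] at this
    simp only [Module.End.mul_apply, LinearMap.sub_apply, LinearMap.smul_apply]
    rw [← neg_neg (h ((f ^ k) v)), this]
    module
  have hfin := (LieAlgebra.ad F (Module.End F V) h).finite_hasEigenvalue
  refine Set.infinite_of_injective_forall_mem (f := fun k : ℕ => (-(2 * k) : F)) ?_ ?_ hfin
  · intro a b hab
    simpa using hab
  · intro k
    refine Module.End.hasEigenvalue_of_hasEigenvector (x := f ^ k) ?_
    rw [Module.End.hasEigenvector_iff, Module.End.mem_eigenspace_iff]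
    refine ⟨?_, hne k⟩
    rw [LieAlgebra.ad_apply, Ring.lie_def, key]
    module

lemma finrank_ker_le_finrank_ker [FiniteDimensional F V] (t : IsSl2Triple h e f)
    (he : IsNilpotent e) : finrank F (LinearMap.ker e) ≤ finrank F (LinearMap.ker f) := by
  obtain ⟨k, hk⟩ := he
  have hd : Disjoint (LinearMap.ker e) (LinearMap.range f) := by
    rw [Submodule.disjoint_def]
    rintro _ h1 ⟨w, rfl⟩
    exact f_apply_eq_zero t k w (by simp [hk]) h1
  have := Submodule.finrank_add_finrank_le_of_disjoint hd
  have := LinearMap.finrank_range_add_finrank_ker f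
  omega

/-- Every vector is uniquely the sum of a vector of `ker f` and one of `range e`. The two meet
trivially by `f_apply_eq_zero` for the opposite triple; the dimensions add up because the same
lemma for both triples gives `dim ker e = dim ker f`. -/
lemma isCompl_ker_range [FiniteDimensional F V] (t : IsSl2Triple h e f)
    (he : IsNilpotent e) : IsCompl (LinearMap.ker f) (LinearMap.range e) := by
  obtain ⟨k, hk⟩ := isNilpotent_f t
  have hd : Disjoint (LinearMap.ker f) (LinearMap.range e) := by
    rw [Submodule.disjoint_def]
    rintro _ h1 ⟨w, rfl⟩
    exact f_apply_eq_zero t.symm k w (by simp [hk]) h1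
  refine ⟨hd, codisjoint_iff.mpr (Submodule.eq_top_of_disjoint _ _ ?_ hd)⟩
  have := finrank_ker_le_finrank_ker t he
  have := LinearMap.finrank_range_add_finrank_ker e
  omega

lemma finrank_ker_f [FiniteDimensional F V] (t : IsSl2Triple h e f)
    (he : IsNilpotent e) : finrank F (LinearMap.ker f) = finrank F (LinearMap.ker e) :=
  le_antisymm (finrank_ker_le_finrank_ker t.symm (isNilpotent_f t))
    (finrank_ker_le_finrank_ker t he)

/-- The lowest weight vectors generate `V` under `e`, so a map commuting with `e` is determined
by its restriction to `ker f`. -/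
lemma eq_zero_of_ker_f [FiniteDimensional F V] (t : IsSl2Triple h e f)
    (he : IsNilpotent e) (A : Module.End F V) (hA : A * e = e * A)
    (h0 : ∀ v, f v = 0 → A v = 0) : A = 0 := by
  obtain ⟨k, hk⟩ := he
  have key : ∀ j v, ∃ v', A v = (e ^ j) (A v') := by
    intro j
    induction j with
    | zero => exact fun v => ⟨v, by simp⟩
    | succ j ih =>
      intro v
      obtain ⟨v', hv'⟩ := ih v
      have := (isCompl_ker_range t ⟨k, hk⟩).sup_eq_top
      obtain ⟨a, ha, b, ⟨c, rfl⟩, rfl⟩ := Submodule.mem_sup.mp (this ▸ Submodule.mem_top (x := v'))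
      refine ⟨c, ?_⟩
      rw [hv', map_add, h0 a ha, zero_add, ← Module.End.mul_apply A, hA, pow_succ]
      rfl
  ext v
  obtain ⟨v', hv'⟩ := key k v
  simp [hv', hk]

end Sl2

/-! ### Dimensions of kernels of powers -/

section Dim

variable {F V : Type*} [Field F] [AddCommGroup V] [Module F V] [FiniteDimensional F V]

lemma finrank_ker_mul (a b : Module.End F V) :
    finrank F (LinearMap.ker (a * b)) =
      finrank F (LinearMap.ker b) + finrank F ↥(LinearMap.range b ⊓ LinearMap.ker a) := by
  have h1 := LinearMap.finrank_range_add_finrank_ker (b.domRestrict (LinearMap.ker (a * b)))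
  have h2 : LinearMap.range (b.domRestrict (LinearMap.ker (a * b))) =
      LinearMap.range b ⊓ LinearMap.ker a := by
    ext v
    simp only [LinearMap.mem_range, Submodule.mem_inf, LinearMap.mem_ker]
    constructor
    · rintro ⟨⟨w, hw⟩, rfl⟩
      exact ⟨⟨w, rfl⟩, hw⟩
    · rintro ⟨⟨w, rfl⟩, hw⟩
      exact ⟨⟨w, hw⟩, rfl⟩
  have h3 : finrank F (LinearMap.ker (b.domRestrict (LinearMap.ker (a * b)))) =
      finrank F (LinearMap.ker b) := by
    have hle : LinearMap.ker b ≤ LinearMap.ker (a * b) := by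
      intro v hv
      simp_all
    rw [LinearMap.ker_domRestrict]
    exact (Submodule.comapSubtypeEquivOfLe hle).finrank_eq
  rw [h2, h3] at h1
  omega

lemma finrank_ker_pow_le (e : Module.End F V) (k : ℕ) :
    finrank F (LinearMap.ker (e ^ k)) ≤ k * finrank F (LinearMap.ker e) := by
  induction k with
  | zero => simp [Module.End.one_eq_id]
  | succ k ih =>
    rw [pow_succ, finrank_ker_mul]
    have : finrank F ↥(LinearMap.range e ⊓ LinearMap.ker (e ^ k)) ≤
        finrank F (LinearMap.ker (e ^ k)) := Submodule.finrank_mono inf_le_right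
    rw [add_mul]
    omega

/-- A nilpotent endomorphism all of whose Jordan blocks have size `D + 1` or `D + 2` satisfies
`ker (e ^ D) ≤ range e`. Counting dimensions, `dim ker (e ^ D) ≤ D (m + n)`, while
`dim ker (e ^ (D + 1)) = dim V - m = (D + 1) (m + n)` forces
`dim (range e ⊓ ker (e ^ D)) = D (m + n)`. -/
lemma ker_pow_le_range (e : Module.End F V) (D m n : ℕ)
    (he2 : finrank F (LinearMap.range (e ^ (D + 1))) = m)
    (he3 : finrank F (LinearMap.ker e) = m + n)
    (he4 : finrank F V = m * (D + 1 + 1) + n * (D + 1)) :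
    LinearMap.ker (e ^ D) ≤ LinearMap.range e := by
  have h1 := LinearMap.finrank_range_add_finrank_ker (e ^ (D + 1))
  have h2 := finrank_ker_pow_le e D
  have h3 := finrank_ker_mul (e ^ D) e
  rw [← pow_succ] at h3
  have h4 : finrank F (LinearMap.ker (e ^ D)) ≤
      finrank F ↥(LinearMap.range e ⊓ LinearMap.ker (e ^ D)) := by
    rw [he3] at h2 h3
    nlinarith
  exact inf_eq_right.mp (Submodule.eq_of_le_of_finrank_le inf_le_right h4)

end Dim

/-! ### Lowest weight spaces -/

section LowestWeight

attribute [local instance] LieRing.ofAssociativeRing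

set_option linter.unusedSectionVars false

variable {F V : Type*} [Field F] [CharZero F] [AddCommGroup V] [Module F V]
  {h e f : Module.End F V} {D : ℕ}

/-- The space of lowest weight vectors of weight `-k`. -/
def lowestWeight (h f : Module.End F V) (k : ℕ) : Submodule F V :=
  LinearMap.ker f ⊓ h.eigenspace (-(k : F))

lemma mem_lowestWeight {k : ℕ} {v : V} :
    v ∈ lowestWeight h f k ↔ f v = 0 ∧ h v = -(k : F) • v := by
  simp [lowestWeight]

lemma h_apply_e_pow (t : IsSl2Triple h e f) {j : ℕ} {v : V} (hv : v ∈ lowestWeight h f j) (k : ℕ) :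
    h ((e ^ k) v) = (2 * k - j : F) • (e ^ k) v := by
  rw [apply_h_e_pow t, (mem_lowestWeight.mp hv).2, map_smul]
  module

lemma f_apply_e_pow (t : IsSl2Triple h e f) (k : ℕ) {v : V} (hv : f v = 0) :
    f ((e ^ (k + 1)) v) = -((k + 1 : F) • (e ^ k) (h v + (k : F) • v)) := by
  have := apply_e_pow_f t k v
  rw [hv, map_zero] at this
  exact eq_neg_of_add_eq_zero_left this.symm

lemma f_apply_h (t : IsSl2Triple h e f) {v : V} (hv : f v = 0) : f (h v) = 0 := by
  have := apply_h_e t.symm v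
  simpa [hv] using this

lemma e_pow_apply_eq_zero (t : IsSl2Triple h e f) (k : ℕ) {v : V} (hv : f v = 0)
    (hk : (e ^ (k + 1)) v = 0) : (e ^ k) (h v + (k : F) • v) = 0 := by
  have := f_apply_e_pow t k hv
  rw [hk, map_zero, eq_comm, neg_eq_zero] at this
  exact (smul_eq_zero.mp this).resolve_left (by exact_mod_cast k.succ_ne_zero)

variable [FiniteDimensional F V]

/-- A lowest weight vector killed by `e ^ D` lies in `range e`, hence vanishes. -/
lemma eq_zero_of_e_pow (t : IsSl2Triple h e f) (he : IsNilpotent e)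
    (hker : LinearMap.ker (e ^ D) ≤ LinearMap.range e) {v : V} (hv : f v = 0)
    (hD : (e ^ D) v = 0) : v = 0 :=
  Submodule.disjoint_def.mp (isCompl_ker_range t he).disjoint v hv (hker hD)

/-- Only the lowest weights `-D` and `-(D + 1)` occur, because `(h + D) (h + D + 1)` vanishes on
`ker f`. -/
lemma exists_lowestWeight_add (t : IsSl2Triple h e f) (he : e ^ (D + 1 + 1) = 0)
    (hker : LinearMap.ker (e ^ D) ≤ LinearMap.range e) {v : V} (hv : f v = 0) :
    ∃ a ∈ lowestWeight h f (D + 1), ∃ b ∈ lowestWeight h f D, v = a + b := by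
  have h1 := e_pow_apply_eq_zero t (D + 1) hv (by simp [he])
  have hf1 : f (h v + ((D + 1 : ℕ) : F) • v) = 0 := by simp [f_apply_h t hv, hv]
  have hf2 : f (h v + (D : F) • v) = 0 := by simp [f_apply_h t hv, hv]
  have h2 := eq_zero_of_e_pow t ⟨_, he⟩ hker
    (by rw [map_add, map_smul, f_apply_h t hf1, hf1, smul_zero, add_zero])
    (e_pow_apply_eq_zero t D hf1 h1)
  simp only [map_add, map_smul] at h2
  refine ⟨-(h v + (D : F) • v), ?_, h v + ((D + 1 : ℕ) : F) • v, ?_, ?_⟩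
  · rw [mem_lowestWeight]
    refine ⟨by rw [map_neg, hf2, neg_zero], ?_⟩
    simp only [map_neg, map_add, map_smul]
    linear_combination (norm := module) -h2
  · rw [mem_lowestWeight]
    refine ⟨hf1, ?_⟩
    simp only [map_add, map_smul]
    linear_combination (norm := module) h2
  · push_cast
    module

lemma exists_decomp (t : IsSl2Triple h e f) (he : e ^ (D + 1 + 1) = 0)
    (hker : LinearMap.ker (e ^ D) ≤ LinearMap.range e) (v : V) :
    ∃ a ∈ lowestWeight h f (D + 1), ∃ b ∈ lowestWeight h f D, ∃ c, v = a + b + e c := by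
  have := (isCompl_ker_range t ⟨_, he⟩).sup_eq_top
  obtain ⟨x, hx, _, ⟨c, rfl⟩, rfl⟩ := Submodule.mem_sup.mp (this ▸ Submodule.mem_top (x := v))
  obtain ⟨a, ha, b, hb, rfl⟩ := exists_lowestWeight_add t he hker hx
  exact ⟨a, ha, b, hb, c, rfl⟩

/-- A vector `w` of lowest weight `-D` generates a block of size `D + 1`: `e ^ (D + 1) w` is both in
`ker f` and in `range e`. -/
lemma e_pow_lowestWeight (t : IsSl2Triple h e f) (he : IsNilpotent e)
    {w : V} (hw : w ∈ lowestWeight h f D) : (e ^ (D + 1)) w = 0 := by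
  obtain ⟨h1, h2⟩ := mem_lowestWeight.mp hw
  refine Submodule.disjoint_def.mp (isCompl_ker_range t he).disjoint _ ?_ ?_
  · rw [LinearMap.mem_ker, f_apply_e_pow t D h1, h2]
    simp
  · rw [pow_succ', Module.End.mul_apply]
    exact LinearMap.mem_range_self _ _

lemma eq_zero_of_mem_lowestWeight_succ (t : IsSl2Triple h e f) (he : IsNilpotent e)
    (hker : LinearMap.ker (e ^ D) ≤ LinearMap.range e) {u : V}
    (hu : u ∈ lowestWeight h f (D + 1)) (h0 : (e ^ (D + 1)) u = 0) : u = 0 := by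
  obtain ⟨h1, h2⟩ := mem_lowestWeight.mp hu
  have h3 := e_pow_apply_eq_zero t D h1 h0
  refine eq_zero_of_e_pow t he hker h1 ?_
  have h4 : h u + (D : F) • u = -u := by
    rw [h2]
    push_cast
    module
  rwa [h4, map_neg, neg_eq_zero] at h3

lemma finrank_lowestWeight_succ (t : IsSl2Triple h e f) (he : e ^ (D + 1 + 1) = 0)
    (hker : LinearMap.ker (e ^ D) ≤ LinearMap.range e) :
    finrank F (lowestWeight h f (D + 1)) = finrank F (LinearMap.range (e ^ (D + 1))) := by
  have hinj : Function.Injective ((e ^ (D + 1)).domRestrict (lowestWeight h f (D + 1))) := by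
    rw [← LinearMap.ker_eq_bot, LinearMap.ker_eq_bot']
    rintro ⟨u, hu⟩ h0
    exact Subtype.ext (eq_zero_of_mem_lowestWeight_succ t ⟨_, he⟩ hker hu h0)
  rw [← LinearMap.finrank_range_of_inj hinj]
  suffices hr : LinearMap.range ((e ^ (D + 1)).domRestrict (lowestWeight h f (D + 1))) =
      LinearMap.range (e ^ (D + 1)) by rw [hr]
  ext v
  simp only [LinearMap.mem_range]
  constructor
  · rintro ⟨⟨u, hu⟩, rfl⟩
    exact ⟨u, rfl⟩
  · rintro ⟨x, rfl⟩
    obtain ⟨a, ha, b, hb, c, rfl⟩ := exists_decomp t he hker x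
    refine ⟨⟨a, ha⟩, ?_⟩
    have : (e ^ (D + 1)) (e c) = 0 := by
      rw [← Module.End.mul_apply, ← pow_succ, he, LinearMap.zero_apply]
    rw [map_add, map_add, this, e_pow_lowestWeight t ⟨_, he⟩ hb]
    simp

lemma finrank_lowestWeight_add (t : IsSl2Triple h e f) (he : e ^ (D + 1 + 1) = 0)
    (hker : LinearMap.ker (e ^ D) ≤ LinearMap.range e) :
    finrank F (lowestWeight h f (D + 1)) + finrank F (lowestWeight h f D) =
      finrank F (LinearMap.ker e) := by
  have h1 : lowestWeight h f (D + 1) ⊔ lowestWeight h f D = LinearMap.ker f := by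
    refine le_antisymm (sup_le inf_le_left inf_le_left) fun v hv => ?_
    obtain ⟨a, ha, b, hb, rfl⟩ := exists_lowestWeight_add t he hker hv
    exact Submodule.add_mem_sup ha hb
  have h2 : lowestWeight h f (D + 1) ⊓ lowestWeight h f D = ⊥ := by
    rw [← disjoint_iff, Submodule.disjoint_def]
    intro v hv hv'
    exact eq_zero_of_mem_lowestWeight_succ t ⟨_, he⟩ hker hv (e_pow_lowestWeight t ⟨_, he⟩ hv')
  rw [← Submodule.finrank_sup_add_finrank_inf_eq, h1, h2, finrank_bot, add_zero,
    finrank_ker_f t ⟨_, he⟩]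

end LowestWeight

/-! ### Dual families and skew-adjoint maps -/

section Forms

variable {F V : Type*} [Field F] [AddCommGroup V] [Module F V]

/-- Dual bases `p`, `q` of a subspace `W` on which the form `β`, with `β a b = s β b a`, is
nondegenerate; only the reproducing identities they satisfy are recorded. -/
lemma exists_dual_families [FiniteDimensional F V] (β : LinearMap.BilinForm F V)
    (W : Submodule F V) (s : F)
    (hs : ∀ a b, β a b = s * β b a) (hnd : ∀ a ∈ W, (∀ b ∈ W, β a b = 0) → a = 0) :
    ∃ p q : Fin (finrank F W) → V, (∀ i, p i ∈ W) ∧ (∀ i, q i ∈ W) ∧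
      (∀ i, β (q i) (p i) = 1) ∧ (∀ v ∈ W, ∑ i, β (q i) v • p i = v) ∧
      (∀ v ∈ W, ∑ i, β (p i) v • q i = s • v) := by
  have hN : (β.restrict W).Nondegenerate := by
    refine ⟨fun a h0 => Subtype.ext (hnd a a.2 fun b hb => h0 ⟨b, hb⟩),
      fun a h0 => Subtype.ext (hnd a a.2 fun b hb => ?_)⟩
    have : β b a = 0 := h0 ⟨b, hb⟩
    rw [hs, this, mul_zero]
  let p := finBasis F W
  let q := (β.restrict W).dualBasis hN p
  have hqp : ∀ i j, β (q i) (p j) = if j = i then 1 else 0 :=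
    fun i j => LinearMap.BilinForm.apply_dualBasis_left hN p i j
  have h1 : ∀ v ∈ W, ∑ i, β (q i) v • (p i : V) = v := by
    intro v hv
    have hv' : ∑ i, p.repr ⟨v, hv⟩ i • (p i : V) = v := by
      have := congrArg W.subtype (p.sum_repr ⟨v, hv⟩)
      simpa only [map_sum, map_smul, Submodule.subtype_apply] using this
    have hc : ∀ i, β (q i) v = p.repr ⟨v, hv⟩ i := by
      intro i
      conv_lhs => rw [← hv']
      simp [hqp]
    simp_rw [hc]
    exact hv'
  refine ⟨fun i => p i, fun i => q i, fun i => (p i).2, fun i => (q i).2, fun i => ?_, h1, ?_⟩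
  · simp [hqp]
  · intro v hv
    rw [← sub_eq_zero]
    refine hnd _ (W.sub_mem (W.sum_mem fun i _ => W.smul_mem _ (q i).2) (W.smul_mem _ hv)) ?_
    intro b hb
    have h2 := congrArg (fun x => β x v) (h1 b hb)
    simp only [map_sum, map_smul, LinearMap.sum_apply, LinearMap.smul_apply, smul_eq_mul] at h2
    simp only [map_sub, map_sum, map_smul, LinearMap.sub_apply, LinearMap.sum_apply,
      LinearMap.smul_apply, smul_eq_mul]
    rw [← hs b v, ← h2, sub_eq_zero]
    exact Finset.sum_congr rfl fun i _ => mul_comm _ _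

lemma bilin_pow_apply (B : LinearMap.BilinForm F V) {e : Module.End F V}
    (he : ∀ v w, B (e v) w = -B v (e w)) (k : ℕ) (v w : V) :
    B ((e ^ k) v) w = (-1) ^ k * B v ((e ^ k) w) := by
  induction k generalizing w with
  | zero => simp
  | succ k ih =>
    rw [pow_succ', Module.End.mul_apply, he, ih, ← Module.End.mul_apply, ← pow_succ,
      ← pow_succ']
    ring

lemma bilin_pow_symm (B : LinearMap.BilinForm F V) {ε : F} (hsym : ∀ v w, B v w = ε * B w v)
    {e : Module.End F V} (he : ∀ v w, B (e v) w = -B v (e w)) (k : ℕ) (v w : V) :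
    B ((e ^ k) v) w = ε * (-1) ^ k * B ((e ^ k) w) v := by
  rw [bilin_pow_apply B he, hsym]
  ring

/-- Eigenvectors of a skew-adjoint map are orthogonal unless their eigenvalues cancel. -/
lemma bilin_eq_zero_of_weight (B : LinearMap.BilinForm F V) {h : Module.End F V}
    (hh : ∀ v w, B (h v) w = -B v (h w)) {v w : V} {a b : F} (hv : h v = a • v)
    (hw : h w = b • w) (hab : a + b ≠ 0) : B v w = 0 := by
  have := hh v w
  rw [hv, hw] at this
  simp only [map_smul, LinearMap.smul_apply, smul_eq_mul] at this
  refine (mul_eq_zero.mp ?_).resolve_left hab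
  linear_combination this

/-- The endomorphism `v ↦ B(a, v) b - ε B(b, v) a`, which corresponds to a decomposable element of
`Λ² V` (for `ε = 1`) or `S² V` (for `ε = -1`) and is skew-adjoint when `B` is `ε`-symmetric. -/
def wedge (B : LinearMap.BilinForm F V) (ε : F) (a b : V) : Module.End F V :=
  (B a).smulRight b - ε • (B b).smulRight a

@[simp]
lemma wedge_apply (B : LinearMap.BilinForm F V) (ε : F) (a b v : V) :
    wedge B ε a b v = B a v • b - (ε * B b v) • a := by
  simp [wedge, smul_smul]

lemma wedge_skew (B : LinearMap.BilinForm F V) {ε : F} (hε : ε * ε = 1)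
    (hsym : ∀ v w, B v w = ε * B w v) (a b v w : V) :
    B (wedge B ε a b v) w = -B v (wedge B ε a b w) := by
  simp only [wedge_apply, map_sub, map_smul, LinearMap.sub_apply, LinearMap.smul_apply,
    smul_eq_mul]
  rw [hsym v a, hsym v b]
  linear_combination -(B a v * B b w) * hε

/-- Skew-adjoint maps act on `wedge B ε a b` as derivations. -/
lemma mul_wedge_sub (B : LinearMap.BilinForm F V) (ε : F) {x : Module.End F V}
    (hx : ∀ v w, B (x v) w = -B v (x w)) (a b : V) :
    x * wedge B ε a b - wedge B ε a b * x = wedge B ε (x a) b + wedge B ε a (x b) := by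
  ext v
  simp only [Module.End.mul_apply, LinearMap.sub_apply, LinearMap.add_apply, wedge_apply, map_sub,
    map_smul, hx]
  module

end Forms

/-! ### Elements of `g(1)_e` and their commutators -/

section Raising

attribute [local instance] LieRing.ofAssociativeRing

set_option linter.unusedSectionVars false

variable {F V : Type*} [Field F] [CharZero F] [AddCommGroup V] [Module F V]
  {h e f : Module.End F V} {D : ℕ} {B : LinearMap.BilinForm F V} {ε : F}

/-- For lowest weight vectors `u`, `w` of weights `-(D + 1)`, `-D`, an element of `g(1)_e`;
up to scalars it sends `e ^ k u'` to `e ^ k w` and `e ^ k w'` to `e ^ (k + 1) u`. -/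
def raising (B : LinearMap.BilinForm F V) (ε : F) (e : Module.End F V) (D : ℕ) (u w : V) :
    Module.End F V :=
  ∑ k ∈ Finset.range (D + 1), (-1 : F) ^ k • wedge B ε ((e ^ (D + 1 - k)) u) ((e ^ k) w)

lemma wedge_zero_left (a : V) : wedge B ε 0 a = 0 := by
  ext v; simp

lemma wedge_zero_right (a : V) : wedge B ε a 0 = 0 := by
  ext v; simp

lemma wedge_smul_left (c : F) (a b : V) : wedge B ε (c • a) b = c • wedge B ε a b := by
  ext v
  simp only [wedge_apply, map_smul, LinearMap.smul_apply, smul_eq_mul]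
  module

lemma wedge_smul_right (c : F) (a b : V) : wedge B ε a (c • b) = c • wedge B ε a b := by
  ext v
  simp only [wedge_apply, map_smul, LinearMap.smul_apply, smul_eq_mul]
  module

lemma raising_skew (hε : ε * ε = 1) (hsym : ∀ v w, B v w = ε * B w v) (u w v v' : V) :
    B (raising B ε e D u w v) v' = -B v (raising B ε e D u w v') := by
  simp only [raising, LinearMap.sum_apply, LinearMap.smul_apply, map_sum, map_smul,
    wedge_skew B hε hsym, smul_neg, Finset.sum_neg_distrib]

/-- The commutator with `e` telescopes. -/
lemma e_mul_raising (he : ∀ v w, B (e v) w = -B v (e w)) {u w : V}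
    (hu : (e ^ (D + 1 + 1)) u = 0) (hw : (e ^ (D + 1)) w = 0) :
    e * raising B ε e D u w = raising B ε e D u w * e := by
  rw [← sub_eq_zero]
  -- The terms of the telescoping sum; `G 0` and `G (D + 1)` vanish by `hu` and `hw`.
  let G : ℕ → Module.End F V := fun k =>
    (-1 : F) ^ k • wedge B ε ((e ^ (D + 1 + 1 - k)) u) ((e ^ k) w)
  have hG : e * raising B ε e D u w - raising B ε e D u w * e =
      ∑ k ∈ Finset.range (D + 1), (G k - G (k + 1)) := by
    rw [raising, Finset.mul_sum, Finset.sum_mul, ← Finset.sum_sub_distrib]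
    refine Finset.sum_congr rfl fun k hk => ?_
    have hk' : k ≤ D + 1 := (Finset.mem_range.mp hk).le
    rw [mul_smul_comm, smul_mul_assoc, ← smul_sub, mul_wedge_sub B ε he,
      ← Module.End.mul_apply, ← pow_succ', ← Module.End.mul_apply, ← pow_succ']
    simp only [G, Nat.add_sub_add_right, show D + 1 - k + 1 = D + 1 + 1 - k by omega]
    rw [pow_succ]
    module
  rw [hG, Finset.sum_range_sub']
  simp [G, hu, hw, wedge_zero_left, wedge_zero_right]

lemma lie_h_raising (t : IsSl2Triple h e f) (hh : ∀ v w, B (h v) w = -B v (h w)) {u w : V}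
    (hu : u ∈ lowestWeight h f (D + 1)) (hw : w ∈ lowestWeight h f D) :
    h * raising B ε e D u w - raising B ε e D u w * h = raising B ε e D u w := by
  rw [raising, Finset.mul_sum, Finset.sum_mul, ← Finset.sum_sub_distrib]
  refine Finset.sum_congr rfl fun k hk => ?_
  have hk' : k ≤ D + 1 := (Finset.mem_range.mp hk).le
  rw [mul_smul_comm, smul_mul_assoc, ← smul_sub, mul_wedge_sub B ε hh, h_apply_e_pow t hu,
    h_apply_e_pow t hw, wedge_smul_left, wedge_smul_right, ← add_smul]
  push_cast [Nat.cast_sub hk']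
  module

/-- `e ^ k v` and `w` are orthogonal unless their `h`-weights `2 k - i` and `-j` cancel. -/
lemma bilin_lowestWeight_eq_zero (t : IsSl2Triple h e f) (hh : ∀ v w, B (h v) w = -B v (h w))
    {i j k : ℕ} {v w : V} (hv : v ∈ lowestWeight h f i) (hw : w ∈ lowestWeight h f j)
    (hk : 2 * k ≠ i + j) : B ((e ^ k) v) w = 0 := by
  refine bilin_eq_zero_of_weight B hh (h_apply_e_pow t hv k) (mem_lowestWeight.mp hw).2 ?_
  intro h0
  apply hk
  have : (2 * k : F) = i + j := by linear_combination h0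
  exact_mod_cast this

lemma raising_apply_left (t : IsSl2Triple h e f) (hh : ∀ v w, B (h v) w = -B v (h w))
    {u w v : V} (hu : u ∈ lowestWeight h f (D + 1)) (hw : w ∈ lowestWeight h f D)
    (hv : v ∈ lowestWeight h f (D + 1)) :
    raising B ε e D u w v = B ((e ^ (D + 1)) u) v • w := by
  simp only [raising, LinearMap.sum_apply, LinearMap.smul_apply]
  rw [Finset.sum_eq_single 0]
  · rw [wedge_apply, bilin_lowestWeight_eq_zero t hh hw hv (by omega)]
    simp
  · intro k hk hk0
    rw [wedge_apply, bilin_lowestWeight_eq_zero t hh hw hv (by omega),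
      bilin_lowestWeight_eq_zero t hh hu hv (by have := Finset.mem_range.mp hk; omega)]
    simp
  · simp

lemma raising_apply_right (t : IsSl2Triple h e f) (hh : ∀ v w, B (h v) w = -B v (h w))
    {u w v : V} (hu : u ∈ lowestWeight h f (D + 1)) (hw : w ∈ lowestWeight h f D)
    (hv : v ∈ lowestWeight h f D) :
    raising B ε e D u w v = (ε * (-1) ^ (D + 1) * B ((e ^ D) w) v) • e u := by
  simp only [raising, LinearMap.sum_apply, LinearMap.smul_apply]
  rw [Finset.sum_eq_single D]
  · rw [wedge_apply, bilin_lowestWeight_eq_zero t hh hu hv (by omega),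
      show D + 1 - D = 1 by omega, pow_one, pow_succ]
    module
  · intro k hk hk0
    rw [wedge_apply, bilin_lowestWeight_eq_zero t hh hw hv (by omega),
      bilin_lowestWeight_eq_zero t hh hu hv (by have := Finset.mem_range.mp hk; omega)]
    simp
  · simp

variable [FiniteDimensional F V]

/-- The form `B (e ^ (D + 1) ·, ·)` is nondegenerate on lowest weight vectors of weight
`-(D + 1)`, since `e ^ (D + 1) u` is orthogonal to the other summands of `V`. -/
lemma nondegenerate_left (t : IsSl2Triple h e f) (hB : B.Nondegenerate)
    (hes : ∀ v w, B (e v) w = -B v (e w)) (he : e ^ (D + 1 + 1) = 0)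
    (hker : LinearMap.ker (e ^ D) ≤ LinearMap.range e) {u : V}
    (hu : u ∈ lowestWeight h f (D + 1))
    (h0 : ∀ v ∈ lowestWeight h f (D + 1), B ((e ^ (D + 1)) u) v = 0) : u = 0 := by
  refine eq_zero_of_mem_lowestWeight_succ t ⟨_, he⟩ hker hu (hB.1 _ fun v => ?_)
  obtain ⟨a, ha, b, hb, c, rfl⟩ := exists_decomp t he hker v
  have hb0 : B ((e ^ (D + 1)) u) b = 0 := by
    rw [bilin_pow_apply B hes, e_pow_lowestWeight t ⟨_, he⟩ hb, map_zero, mul_zero]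
  have hc0 : B ((e ^ (D + 1)) u) (e c) = 0 := by
    rw [← neg_eq_zero, ← hes, ← Module.End.mul_apply, ← pow_succ', he]
    simp
  rw [map_add, map_add, h0 a ha, hb0, hc0, add_zero, add_zero]

/-- The form `B (e ^ D ·, ·)` is nondegenerate on lowest weight vectors of weight `-D`. -/
lemma nondegenerate_right (t : IsSl2Triple h e f) (hB : B.Nondegenerate)
    (hes : ∀ v w, B (e v) w = -B v (e w)) (hh : ∀ v w, B (h v) w = -B v (h w))
    (he : e ^ (D + 1 + 1) = 0)
    (hker : LinearMap.ker (e ^ D) ≤ LinearMap.range e) {w : V}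
    (hw : w ∈ lowestWeight h f D)
    (h0 : ∀ v ∈ lowestWeight h f D, B ((e ^ D) w) v = 0) : w = 0 := by
  refine eq_zero_of_e_pow t ⟨_, he⟩ hker (mem_lowestWeight.mp hw).1 (hB.1 _ fun v => ?_)
  obtain ⟨a, ha, b, hb, c, rfl⟩ := exists_decomp t he hker v
  have hc0 : B ((e ^ D) w) (e c) = 0 := by
    rw [← neg_eq_zero, ← hes, ← Module.End.mul_apply, ← pow_succ',
      e_pow_lowestWeight t ⟨_, he⟩ hw]
    simp
  rw [map_add, map_add, h0 b hb, bilin_lowestWeight_eq_zero t hh hw ha (by omega), hc0,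
    add_zero, add_zero]

/-- Summed over dual bases of both lowest weight spaces, the commutators of `raising` elements give
an `S` which acts on the two lowest weight spaces by multiples of `e`; the factor for each space is,
up to sign, twice the dimension of the other one. -/
lemma exists_central (t : IsSl2Triple h e f) (hB : B.Nondegenerate) (hε : ε * ε = 1)
    (hsym : ∀ v w, B v w = ε * B w v)
    (hes : ∀ v w, B (e v) w = -B v (e w)) (hh : ∀ v w, B (h v) w = -B v (h w))
    (he : e ^ (D + 1 + 1) = 0)
    (hker : LinearMap.ker (e ^ D) ≤ LinearMap.range e) :
    ∃ S ∈ Submodule.span F {z : Module.End F V |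
        ∃ u ∈ lowestWeight h f (D + 1), ∃ w ∈ lowestWeight h f D,
        ∃ u' ∈ lowestWeight h f (D + 1), ∃ w' ∈ lowestWeight h f D,
          z = raising B ε e D u w * raising B ε e D u' w' -
            raising B ε e D u' w' * raising B ε e D u w},
      (∀ v ∈ lowestWeight h f (D + 1),
        S v = (-2 * finrank F (lowestWeight h f D) : F) • e v) ∧
      (∀ v ∈ lowestWeight h f D,
        S v = (2 * finrank F (lowestWeight h f (D + 1)) : F) • e v) := by
  obtain ⟨p, q, hp, hq, hqp, hsum, hsum'⟩ := exists_dual_families (B.compLeft (e ^ (D + 1)))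
    (lowestWeight h f (D + 1)) (ε * (-1) ^ (D + 1))
    (fun a b => bilin_pow_symm B hsym hes _ a b)
    (fun a ha h0 => nondegenerate_left t hB hes he hker ha h0)
  obtain ⟨r, s, hr, hs, hsr, hsumN, hsumN'⟩ := exists_dual_families (B.compLeft (e ^ D))
    (lowestWeight h f D) (ε * (-1) ^ D)
    (fun a b => bilin_pow_symm B hsym hes _ a b)
    (fun a ha h0 => nondegenerate_right t hB hes hh he hker ha h0)
  simp only [LinearMap.BilinForm.compLeft_apply] at hqp hsum hsum' hsr hsumN hsumN'
  have hpq (i) : B ((e ^ (D + 1)) (p i)) (q i) = ε * (-1) ^ (D + 1) := by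
    rw [bilin_pow_symm B hsym hes, hqp, mul_one]
  have hrs (i) : B ((e ^ D) (r i)) (s i) = ε * (-1) ^ D := by
    rw [bilin_pow_symm B hsym hes, hsr, mul_one]
  have hcomm {u w : V} (hw : w ∈ lowestWeight h f D) (v : V) :
      raising B ε e D u w (e v) = e (raising B ε e D u w v) :=
    (LinearMap.congr_fun (e_mul_raising hes (by simp [he]) (e_pow_lowestWeight t ⟨_, he⟩ hw)) v).symm
  have hsq : ((-1 : F) ^ D) * (-1) ^ D = 1 := by rw [← mul_pow]; simp
  refine ⟨∑ i, ∑ j, (raising B ε e D (p i) (r j) * raising B ε e D (q i) (s j) -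
    raising B ε e D (q i) (s j) * raising B ε e D (p i) (r j)), ?_, ?_, ?_⟩
  · exact Submodule.sum_mem _ fun i _ => Submodule.sum_mem _ fun j _ => Submodule.subset_span
      ⟨_, hp i, _, hr j, _, hq i, _, hs j, rfl⟩
  · intro v hv
    have key (i j) : (raising B ε e D (p i) (r j) * raising B ε e D (q i) (s j) -
        raising B ε e D (q i) (s j) * raising B ε e D (p i) (r j)) v =
        -(B ((e ^ (D + 1)) (q i)) v • e (p i)) -
          (ε * (-1) ^ (D + 1)) • (B ((e ^ (D + 1)) (p i)) v • e (q i)) := by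
      rw [LinearMap.sub_apply, Module.End.mul_apply, Module.End.mul_apply,
        raising_apply_left t hh (hq i) (hs j) hv, raising_apply_left t hh (hp i) (hr j) hv,
        map_smul, map_smul, raising_apply_right t hh (hp i) (hr j) (hs j),
        raising_apply_right t hh (hq i) (hs j) (hr j), hrs, hsr]
      have : ε * (-1) ^ (D + 1) * (ε * (-1) ^ D) = -1 := by
        rw [pow_succ]
        linear_combination (-(ε * ε)) * hsq - hε
      rw [this]
      module
    have e1 := congrArg e (hsum v hv)
    have e2 := congrArg e (hsum' v hv)
    simp only [map_sum, map_smul] at e1 e2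
    simp only [LinearMap.sum_apply, key, Finset.sum_const, Finset.card_univ, Fintype.card_fin]
    rw [← Finset.smul_sum, Finset.sum_sub_distrib, Finset.sum_neg_distrib, ← Finset.smul_sum,
      e1, e2, smul_smul, ← Nat.cast_smul_eq_nsmul F]
    have : ε * (-1) ^ (D + 1) * (ε * (-1) ^ (D + 1)) = 1 := by
      rw [pow_succ]
      linear_combination (ε * ε) * hsq + hε
    rw [this]
    module
  · intro v hv
    have key (i j) : (raising B ε e D (p i) (r j) * raising B ε e D (q i) (s j) -
        raising B ε e D (q i) (s j) * raising B ε e D (p i) (r j)) v =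
        B ((e ^ D) (s j)) v • e (r j) -
          (ε * (-1) ^ (D + 1)) • (B ((e ^ D) (r j)) v • e (s j)) := by
      rw [LinearMap.sub_apply, Module.End.mul_apply, Module.End.mul_apply,
        raising_apply_right t hh (hq i) (hs j) hv, raising_apply_right t hh (hp i) (hr j) hv,
        map_smul, map_smul, hcomm (hr j), hcomm (hs j),
        raising_apply_left t hh (hp i) (hr j) (hq i),
        raising_apply_left t hh (hq i) (hs j) (hp i), hpq, hqp, map_smul, map_smul,
        smul_smul, smul_smul]
      have : ε * (-1) ^ (D + 1) * (ε * (-1) ^ (D + 1)) = 1 := by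
        rw [pow_succ]
        linear_combination (ε * ε) * hsq + hε
      rw [show ε * (-1) ^ (D + 1) * B ((e ^ D) (s j)) v * (ε * (-1) ^ (D + 1)) =
        B ((e ^ D) (s j)) v by linear_combination B ((e ^ D) (s j)) v * this]
      module
    have e1 := congrArg e (hsumN v hv)
    have e2 := congrArg e (hsumN' v hv)
    simp only [map_sum, map_smul] at e1 e2
    simp only [LinearMap.sum_apply, key, Finset.sum_const, Finset.card_univ, Fintype.card_fin]
    rw [Finset.sum_sub_distrib, ← Finset.smul_sum, e1, e2, smul_smul,
      ← Nat.cast_smul_eq_nsmul F]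
    have : ε * (-1) ^ (D + 1) * (ε * (-1) ^ D) = -1 := by
      rw [pow_succ]
      linear_combination (-(ε * ε)) * hsq - hε
    rw [this]
    module

end Raising

end TwoBlock

/-- For nilpotent `e` of Jordan type `((d+1)^m, d^n)` in `so(V)` or `sp(V)`, with
decomposition `e = e_d + e_{d+1}` (both parts again skew-adjoint), the element
`m·e_d - n·e_{d+1}` lies in `[g(1)_e, g(1)_e]`. -/
theorem two_block_central_element_so_sp
    (F : Type*) [Field F] [IsAlgClosed F] [CharZero F]
    (V : Type*) [AddCommGroup V] [Module F V] [FiniteDimensional F V]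
    (B : LinearMap.BilinForm F V) (hB : B.Nondegenerate)
    (ε : F) (hε : ε = 1 ∨ ε = -1)
    (hsym : ∀ v w : V, B v w = ε * B w v)
    (g : Set (Module.End F V))
    (hg : g = {x : Module.End F V | ∀ v w : V, B (x v) w = - B v (x w)})
    (d m n : ℕ) (hd1 : 1 ≤ d) (hm : 1 ≤ m) (hn : 1 ≤ n)
    (e h f : Module.End F V) (he : e ∈ g) (hh : h ∈ g) (hf : f ∈ g)
    (he1 : e ^ (d + 1) = 0)
    (he2 : finrank F (LinearMap.range (e ^ d)) = m)
    (he3 : finrank F (LinearMap.ker e) = m + n)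
    (he4 : finrank F V = m * (d + 1) + n * d)
    (t1 : ⁅h, e⁆ = (2 : F) • e) (t2 : ⁅h, f⁆ = (-2 : F) • f) (t3 : ⁅e, f⁆ = h)
    (g1e : Set (Module.End F V))
    (hg1e : g1e = {z ∈ g | ⁅h, z⁆ = (1 : F) • z ∧ ⁅e, z⁆ = 0}) :
    ∃ x y : Module.End F V, x ∈ g ∧ y ∈ g ∧
      e = x + y ∧ x * y = 0 ∧ y * x = 0 ∧
      x ^ d = 0 ∧ y ^ (d + 1) = 0 ∧
      finrank F (LinearMap.range (y ^ d)) = m ∧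
      (m : F) • x - (n : F) • y ∈
        Submodule.span F {z : Module.End F V | ∃ a ∈ g1e, ∃ b ∈ g1e, z = ⁅a, b⁆} := by
  subst hg hg1e
  simp only [Set.mem_ofPred_eq] at he hh hf ⊢
  obtain ⟨D, rfl⟩ : ∃ D, d = D + 1 := ⟨d - 1, by omega⟩
  have hεε : ε * ε = 1 := by rcases hε with rfl | rfl <;> simp
  have he0 : e ≠ 0 := by
    rintro rfl
    rw [zero_pow (Nat.succ_ne_zero D), LinearMap.range_zero, finrank_bot] at he2
    omega
  have t := TwoBlock.isSl2Triple_of_commutators he0 t1 t2 t3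
  have hker := TwoBlock.ker_pow_le_range e D m n he2 he3 he4
  have hM := (TwoBlock.finrank_lowestWeight_succ t he1 hker).trans he2
  have hN : finrank F (TwoBlock.lowestWeight h f D) = n := by
    have := TwoBlock.finrank_lowestWeight_add t he1 hker
    omega
  obtain ⟨S, hS, hSM, hSN⟩ := TwoBlock.exists_central t hB hεε hsym he hh he1 hker
  rw [hN] at hSM
  rw [hM] at hSN
  have hcomm {u w : V} (hw : w ∈ TwoBlock.lowestWeight h f D) :
      Commute e (TwoBlock.raising B ε e D u w) :=
    TwoBlock.e_mul_raising he (by simp [he1]) (TwoBlock.e_pow_lowestWeight t ⟨_, he1⟩ hw)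
  have hSe : Commute S e := by
    clear hSM hSN
    induction hS using Submodule.span_induction with
    | zero => exact Commute.zero_left e
    | add a b _ _ ha hb => exact ha.add_left hb
    | smul c a _ ha => exact ha.smul_left c
    | mem z hz =>
      obtain ⟨u, hu, w, hw, u', hu', w', hw', rfl⟩ := hz
      exact (((hcomm hw).mul_right (hcomm hw')).sub_right ((hcomm hw').mul_right (hcomm hw))).symm
  have hSskew : ∀ v w, B (S v) w = -B v (S w) := by
    clear hSe hSM hSN
    induction hS using Submodule.span_induction with
    | zero => simp
    | add a b _ _ ha hb => intro v w; simp [ha, hb]; ring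
    | smul c a _ ha => intro v w; simp [ha]
    | mem z hz =>
      obtain ⟨u, hu, w, hw, u', hu', w', hw', rfl⟩ := hz
      intro v v'
      simp only [LinearMap.sub_apply, Module.End.mul_apply, map_sub,
        TwoBlock.raising_skew hεε hsym]
      ring
  have hSspan : S ∈ Submodule.span F {z : Module.End F V | ∃ a ∈ {z ∈ {x : Module.End F V |
      ∀ v w : V, B (x v) w = - B v (x w)} | ⁅h, z⁆ = (1 : F) • z ∧ ⁅e, z⁆ = 0},
      ∃ b ∈ {z ∈ {x : Module.End F V | ∀ v w : V, B (x v) w = - B v (x w)} |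
        ⁅h, z⁆ = (1 : F) • z ∧ ⁅e, z⁆ = 0}, z = ⁅a, b⁆} := by
    have hg1 {u w : V} (hu : u ∈ TwoBlock.lowestWeight h f (D + 1))
        (hw : w ∈ TwoBlock.lowestWeight h f D) : TwoBlock.raising B ε e D u w ∈
        {z ∈ {x : Module.End F V | ∀ v w : V, B (x v) w = - B v (x w)} |
          ⁅h, z⁆ = (1 : F) • z ∧ ⁅e, z⁆ = 0} := by
      refine ⟨TwoBlock.raising_skew hεε hsym u w, ?_, ?_⟩
      · rw [Ring.lie_def, TwoBlock.lie_h_raising t hh hu hw, one_smul]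
      · rw [Ring.lie_def, (hcomm hw).eq, sub_self]
    refine Submodule.span_mono ?_ hS
    rintro _ ⟨u, hu, w, hw, u', hu', w', hw', rfl⟩
    exact ⟨_, hg1 hu hw, _, hg1 hu' hw', rfl⟩
  have hext (A : Module.End F V) (hA : Commute A e)
      (h1 : ∀ v ∈ TwoBlock.lowestWeight h f (D + 1), A v = 0)
      (h2 : ∀ v ∈ TwoBlock.lowestWeight h f D, A v = 0) : A = 0 := by
    refine TwoBlock.eq_zero_of_ker_f t ⟨_, he1⟩ A hA fun v hv => ?_
    obtain ⟨a, ha, b, hb, rfl⟩ := TwoBlock.exists_lowestWeight_add t he1 hker hv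
    rw [map_add, h1 a ha, h2 b hb, add_zero]
  have hc : (2 * (m + n) : F) ≠ 0 := by
    have : 2 * (m + n) ≠ 0 := by omega
    exact_mod_cast this
  -- `S` is `-2n` times `e` on the blocks of size `D + 2` and `2m` times `e` on those of size `D + 1`,
  -- so the restrictions of `e` to the two families of blocks are linear combinations of `S` and `e`.
  let x : Module.End F V := (2 * (m + n) : F)⁻¹ • (S + (2 * n : F) • e)
  let y : Module.End F V := (2 * (m + n) : F)⁻¹ • ((2 * m : F) • e - S)
  have hxe : Commute x e :=
    (hSe.add_left ((Commute.refl e).smul_left _)).smul_left _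
  have hye : Commute y e :=
    (((Commute.refl e).smul_left _).sub_left hSe).smul_left _
  have hxM : ∀ v ∈ TwoBlock.lowestWeight h f (D + 1), x v = 0 := by
    intro v hv
    simp only [x, LinearMap.smul_apply, LinearMap.add_apply, hSM v hv]
    module
  have hyM : ∀ v ∈ TwoBlock.lowestWeight h f (D + 1), y v = e v := by
    intro v hv
    simp only [y, LinearMap.smul_apply, LinearMap.sub_apply, hSM v hv]
    rw [← sub_smul, smul_smul, show (2 * m - -2 * n : F) = 2 * (m + n) by ring,
      inv_mul_cancel₀ hc, one_smul]
  have hxN : ∀ v ∈ TwoBlock.lowestWeight h f D, x v = e v := by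
    intro v hv
    simp only [x, LinearMap.smul_apply, LinearMap.add_apply, hSN v hv]
    rw [← add_smul, smul_smul, ← mul_add, inv_mul_cancel₀ hc, one_smul]
  have hyN : ∀ v ∈ TwoBlock.lowestWeight h f D, y v = 0 := by
    intro v hv
    simp only [y, LinearMap.smul_apply, LinearMap.sub_apply, hSN v hv]
    module
  have hpow (A : Module.End F V) (hA : Commute A e) (v : V) (hv : A v = e v) (k : ℕ) :
      (A ^ k) v = (e ^ k) v := by
    induction k with
    | zero => rfl
    | succ k ih =>
      rw [pow_succ, Module.End.mul_apply, hv, ← Module.End.mul_apply, (hA.pow_left k).eq,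
        Module.End.mul_apply, ih, pow_succ', Module.End.mul_apply]
  have hyD : y ^ (D + 1) = e ^ (D + 1) := by
    rw [← sub_eq_zero]
    refine hext _ ((hye.pow_left _).sub_left ((Commute.refl e).pow_left _)) ?_ ?_
    · intro v hv
      rw [LinearMap.sub_apply, hpow y hye v (hyM v hv), sub_self]
    · intro v hv
      rw [LinearMap.sub_apply, TwoBlock.e_pow_lowestWeight t ⟨_, he1⟩ hv, pow_succ,
        Module.End.mul_apply, hyN v hv, map_zero, sub_zero]
  refine ⟨x, y, ?_, ?_, ?_, ?_, ?_, ?_, ?_, by rw [hyD, he2], ?_⟩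
  · intro v w
    simp only [x, LinearMap.smul_apply, LinearMap.add_apply, map_smul, map_add, hSskew, he,
      smul_eq_mul]
    ring
  · intro v w
    simp only [y, LinearMap.smul_apply, LinearMap.sub_apply, map_smul, map_sub, hSskew, he,
      smul_eq_mul]
    ring
  · have : x + y = ((2 * (m + n) : F)⁻¹ * (2 * (m + n))) • e := by
      simp only [x, y]
      module
    rw [this, inv_mul_cancel₀ hc, one_smul]
  · refine hext _ (hxe.mul_left hye) (fun v hv => ?_) (fun v hv => ?_)
    · rw [Module.End.mul_apply, hyM v hv, ← Module.End.mul_apply, hxe.eq, Module.End.mul_apply,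
        hxM v hv, map_zero]
    · rw [Module.End.mul_apply, hyN v hv, map_zero]
  · refine hext _ (hye.mul_left hxe) (fun v hv => ?_) (fun v hv => ?_)
    · rw [Module.End.mul_apply, hxM v hv, map_zero]
    · rw [Module.End.mul_apply, hxN v hv, ← Module.End.mul_apply, hye.eq, Module.End.mul_apply,
        hyN v hv, map_zero]
  · refine hext _ (hxe.pow_left _) (fun v hv => ?_) (fun v hv => ?_)
    · rw [pow_succ, Module.End.mul_apply, hxM v hv, map_zero]
    · rw [hpow x hxe v (hxN v hv), TwoBlock.e_pow_lowestWeight t ⟨_, he1⟩ hv]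
  · refine hext _ (hye.pow_left _) (fun v hv => ?_) (fun v hv => ?_)
    · rw [hpow y hye v (hyM v hv), he1, LinearMap.zero_apply]
    · rw [pow_succ, Module.End.mul_apply, hyN v hv, map_zero]
  · have hfin : (m : F) • x - (n : F) • y = (2⁻¹ : F) • S := by
      have h2 : (m : F) • x - (n : F) • y = ((2 * (m + n) : F)⁻¹ * (m + n)) • S := by
        simp only [x, y]
        module
      rw [h2]
      congr 1
      have : (m + n : F) ≠ 0 := right_ne_zero_of_mul hc
      field_simp
    rw [hfin]
    exact Submodule.smul_mem _ _ hSspan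
end

section
/- Let F be an algebraically closed field of characteristic 0, V a finite-dimensional F-vector space, B a nondegenerate bilinear form on V with B(v,w) = ε·B(w,v) for all v, w (ε = ±1), and g the Lie algebra of B-skew-adjoint endomorphisms of V. Let d, k ≥ 1 and let e ∈ g be nilpotent with rectangular Jordan type (d^k), i.e., e^d = 0, dim ker(e) = k, and dim V = kd. Let (e, h, f) be an sl2-triple in g. Then for every integer m with 0 ≤ m < d: if (-1)^d·ε = 1, then dim g(2m)_e = k(k+1)/2 when m is even and dim g(2m)_e = k(k-1)/2 when m is odd; if (-1)^d·ε = -1, then dim g(2m)_e = k(k-1)/2 when m is even and dim g(2m)_e = k(k+1)/2 when m is odd. -/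
/-!
Write `d = n + 1`. The space `V` is determined by the lowest weight space `L = ker (h + n)` of the
`sl₂`-triple. Commuting `f` past `e ^ (n + 1) = 0` gives `e ^ n (h + n) = 0`, so `h + n` maps `V`
into `ker e ^ n`, and rectangularity of the Jordan type says `ker e ^ n = im e`
(`pow_apply_h_add`, `ker_pow_eq_range`). Hence `h` acts on `im e ^ i / im e ^ (i + 1)` by
`-n + 2 * i`, from which `V = L ⊕ im e` (`lowest_inf_range`, `lowest_finrank`), `dim L = k`, and
`V = L ⊕ e L ⊕ ⋯ ⊕ e ^ n L` (`span_eq_top`, `exists_extend`).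

An element `x` of `g(2m)_e` is determined by its restriction to `L`, which takes values in
`e ^ m L`: it has the form `e ^ i u ↦ e ^ (i + m) (y u)` for an endomorphism `y` of `L`. The form
`φ u w = B u (e ^ n w)` on `L` is nondegenerate (`lowForm_nondegenerate`), and `x` is skew for `B`
exactly when `ψ u w = φ u (y w) = B u (e ^ (n - m) (x w))` satisfies `ψ u w = τ * ψ w u` with
`τ = (-1) ^ d * ε * (-1) ^ m`; the other pairings `B (e ^ a u) (e ^ c w)` vanish because weight
spaces with nonzero total weight are orthogonal. Thus `g(2m)_e` is isomorphic to the space of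
symmetric (`τ = 1`) or skew (`τ = -1`) `k × k` matrices (`finrank_eq_tauMat`), whose dimensions are
`finrank_tauMat_one` and `finrank_tauMat_neg_one`.
-/

open Module

namespace RectNilp

/-! ### The lowest weight space of a rectangular sl₂-triple -/

section Sl2

variable {F V : Type*} [Field F] [AddCommGroup V] [Module F V]
  {e h f : Module.End F V}

lemma h_pow_apply (t1 : ⁅h, e⁆ = (2 : F) • e) (i : ℕ) (v : V) :
    h ((e ^ i) v) = (e ^ i) (h v) + (2 * (i : F)) • (e ^ i) v := by
  have key : ∀ w, h (e w) = e (h w) + (2 : F) • e w := fun w => by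
    have := LinearMap.congr_fun t1 w
    simp only [Ring.lie_def, LinearMap.sub_apply, Module.End.mul_apply, LinearMap.smul_apply] at this
    rw [← this]; abel
  induction i with
  | zero => simp
  | succ i ih =>
    rw [pow_succ', Module.End.mul_apply, key, ih, Module.End.mul_apply, map_add, map_smul]
    push_cast
    module

lemma f_pow_succ_apply (t1 : ⁅h, e⁆ = (2 : F) • e) (t3 : ⁅e, f⁆ = h) (n : ℕ) (v : V) :
    f ((e ^ (n + 1)) v) = (e ^ (n + 1)) (f v)
      - ((n : F) + 1) • (e ^ n) (h v + (n : F) • v) := by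
  have key : ∀ w, f (e w) = e (f w) - h w := fun w => by
    have := LinearMap.congr_fun t3 w
    simp only [Ring.lie_def, LinearMap.sub_apply, Module.End.mul_apply] at this
    rw [← this]; abel
  induction n with
  | zero => simp [key]
  | succ n ih =>
    rw [pow_succ' e (n + 1), Module.End.mul_apply, key, ih, h_pow_apply t1]
    simp only [Module.End.mul_apply, map_add, map_smul, map_sub, pow_succ']
    push_cast
    module

/-- If `e ^ (n + 1) = 0`, commuting `f` past `e ^ (n + 1)` shows that `h + n` maps `V` into the
kernel of `e ^ n`. -/
lemma pow_apply_h_add [CharZero F] (t1 : ⁅h, e⁆ = (2 : F) • e) (t3 : ⁅e, f⁆ = h) {n : ℕ}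
    (hn : e ^ (n + 1) = 0) (v : V) : (e ^ n) (h v + (n : F) • v) = 0 := by
  have := f_pow_succ_apply t1 t3 n v
  rw [hn] at this
  simp only [LinearMap.zero_apply, map_zero, zero_sub, zero_eq_neg, smul_eq_zero] at this
  exact this.resolve_left (Nat.cast_add_one_ne_zero n)

variable [FiniteDimensional F V]

lemma finrank_ker_pow_le (e : Module.End F V) (i : ℕ) :
    finrank F (LinearMap.ker (e ^ i)) ≤ i * finrank F (LinearMap.ker e) := by
  induction i with
  | zero => simp [Module.End.one_eq_id]
  | succ i ih =>
    have h1 := LinearMap.finrank_range_add_finrank_ker (e.domRestrict (LinearMap.ker (e ^ (i + 1))))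
    have h2 : finrank F (LinearMap.range (e.domRestrict (LinearMap.ker (e ^ (i + 1)))))
        ≤ finrank F (LinearMap.ker (e ^ i)) := by
      apply Submodule.finrank_mono
      rintro _ ⟨⟨w, hw⟩, rfl⟩
      rw [LinearMap.mem_ker, pow_succ, Module.End.mul_apply] at hw
      exact hw
    have h3 : finrank F (LinearMap.ker (e.domRestrict (LinearMap.ker (e ^ (i + 1)))))
        ≤ finrank F (LinearMap.ker e) := by
      rw [← LinearMap.finrank_range_of_inj
        (f := (Submodule.subtype _).domRestrict
          (LinearMap.ker (e.domRestrict (LinearMap.ker (e ^ (i + 1))))))]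
      · apply Submodule.finrank_mono
        rintro _ ⟨⟨⟨w, _⟩, hw'⟩, rfl⟩
        exact hw'
      · rintro ⟨⟨a, _⟩, _⟩ ⟨⟨b, _⟩, _⟩ hab
        simpa using hab
    rw [add_mul, one_mul]
    omega

variable {n k : ℕ}

/-- Rectangularity of the Jordan type: all Jordan blocks have size exactly `n + 1`, so the kernel
of `e ^ n` is no larger than the image of `e`. -/
lemma ker_pow_eq_range (hn : e ^ (n + 1) = 0) (hk : finrank F (LinearMap.ker e) = k)
    (hV : finrank F V = k * (n + 1)) : LinearMap.range e = LinearMap.ker (e ^ n) := by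
  apply Submodule.eq_of_le_of_finrank_le
  · rintro _ ⟨w, rfl⟩
    rw [LinearMap.mem_ker, ← Module.End.mul_apply, ← pow_succ, hn, LinearMap.zero_apply]
  · have h1 := finrank_ker_pow_le e n
    have h2 := LinearMap.finrank_range_add_finrank_ker e
    rw [hk] at h1 h2
    rw [hV] at h2
    nlinarith

/-- The weight space of `h` of weight `-n`. -/
def lowest (h : Module.End F V) (n : ℕ) : Submodule F V := LinearMap.ker (h + (n : F) • 1)

omit [FiniteDimensional F V] in
lemma mem_lowest {v : V} : v ∈ lowest h n ↔ h v = -(n : F) • v := by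
  simp [lowest, LinearMap.mem_ker, add_eq_zero_iff_eq_neg]

omit [FiniteDimensional F V] in
lemma h_pow_lowest (t1 : ⁅h, e⁆ = (2 : F) • e) {v : V} (hv : v ∈ lowest h n) (i : ℕ) :
    h ((e ^ i) v) = (2 * (i : F) - n) • (e ^ i) v := by
  rw [h_pow_apply t1, mem_lowest.1 hv, map_smul]
  module

omit [FiniteDimensional F V] in
/-- The lowest weight space meets the image of `e` trivially: `h + n` acts on
`im e ^ i / im e ^ (i + 1)` by `2 * i`, so a vector of weight `-n` in `im e` lies in every
`im e ^ i`. -/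
lemma lowest_inf_range [CharZero F] (t1 : ⁅h, e⁆ = (2 : F) • e) (t3 : ⁅e, f⁆ = h)
    (hn : e ^ (n + 1) = 0) (hr : LinearMap.range e = LinearMap.ker (e ^ n)) {v : V}
    (hv : v ∈ lowest h n) (hv' : v ∈ LinearMap.range e) : v = 0 := by
  have step : ∀ i : ℕ, v ∈ LinearMap.range (e ^ (i + 1)) := by
    intro i
    induction i with
    | zero => simpa using hv'
    | succ i ih =>
      obtain ⟨w, hw⟩ := ih
      have hw' : h w + (n : F) • w ∈ LinearMap.range e := by
        rw [hr]; exact pow_apply_h_add t1 t3 hn w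
      obtain ⟨u, hu⟩ := hw'
      have h1 := h_pow_apply t1 (i + 1) w
      rw [hw, mem_lowest.1 hv] at h1
      have h2 : (e ^ (i + 1 + 1)) u = (e ^ (i + 1)) (h w) + (n : F) • v := by
        rw [pow_succ, Module.End.mul_apply, hu, map_add, map_smul, hw]
      have hne : (2 * ((i + 1 : ℕ) : F)) ≠ 0 := by
        exact mul_ne_zero two_ne_zero (Nat.cast_ne_zero.2 (Nat.succ_ne_zero i))
      have h3 : (e ^ (i + 1 + 1)) u = -(2 * ((i + 1 : ℕ) : F)) • v := by
        rw [h2, eq_sub_of_add_eq h1.symm]; module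
      refine ⟨-(2 * ((i + 1 : ℕ) : F))⁻¹ • u, ?_⟩
      rw [map_smul, h3, smul_smul, neg_mul_neg, inv_mul_cancel₀ hne, one_smul]
  obtain ⟨w, hw⟩ := step n
  rw [← hw, hn, LinearMap.zero_apply]

lemma lowest_finrank [CharZero F] (t1 : ⁅h, e⁆ = (2 : F) • e) (t3 : ⁅e, f⁆ = h)
    (hn : e ^ (n + 1) = 0) (hr : LinearMap.range e = LinearMap.ker (e ^ n))
    (hk : finrank F (LinearMap.ker e) = k) :
    finrank F (lowest h n) = k ∧ lowest h n ⊔ LinearMap.range e = ⊤ := by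
  have h1 := LinearMap.finrank_range_add_finrank_ker e
  have h2 := LinearMap.finrank_range_add_finrank_ker (h + (n : F) • 1)
  have h3 : finrank F (LinearMap.range (h + (n : F) • 1)) ≤ finrank F (LinearMap.range e) := by
    apply Submodule.finrank_mono
    rintro _ ⟨w, rfl⟩
    rw [hr]
    exact pow_apply_h_add t1 t3 hn w
  have h4 := Submodule.finrank_sup_add_finrank_inf_eq (lowest h n) (LinearMap.range e)
  have h5 : lowest h n ⊓ LinearMap.range e = ⊥ := by
    rw [eq_bot_iff]
    rintro v ⟨hv, hv'⟩
    exact lowest_inf_range t1 t3 hn hr hv hv'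
  have h6 := Submodule.finrank_le (lowest h n ⊔ LinearMap.range e)
  rw [h5, finrank_bot, add_zero] at h4
  change _ + finrank F (lowest h n) = _ at h2
  refine ⟨by omega, Submodule.eq_top_of_finrank_eq (by omega)⟩

omit [FiniteDimensional F V] in
/-- The vectors `e ^ i u`, with `u` of lowest weight, span `V`. -/
lemma span_eq_top (hn : e ^ (n + 1) = 0) (hsup : lowest h n ⊔ LinearMap.range e = ⊤)
    (S : Submodule F V) (hS : ∀ i : ℕ, ∀ u ∈ lowest h n, (e ^ i) u ∈ S) (v : V) : v ∈ S := by
  have key : ∀ j i : ℕ, n + 1 ≤ i + j → ∀ w, (e ^ i) w ∈ S := by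
    intro j
    induction j with
    | zero =>
      intro i hi w
      rw [pow_eq_zero_of_le (show n + 1 ≤ i by omega) hn]
      exact S.zero_mem
    | succ j ih =>
      intro i hi w
      have hw : w ∈ lowest h n ⊔ LinearMap.range e := hsup ▸ Submodule.mem_top
      obtain ⟨u, hu, _, ⟨w', rfl⟩, rfl⟩ := Submodule.mem_sup.1 hw
      rw [map_add, ← Module.End.mul_apply, ← pow_succ]
      exact S.add_mem (hS i u hu) (ih (i + 1) (by omega) w')
  simpa using key (n + 1) 0 (by omega) v

/-- An endomorphism of the lowest weight space determines, for each `m`, a linear map on `V`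
commuting with `e` and raising degrees in `V = ⨁ e ^ i (lowest h n)` by `m`. -/
lemma exists_extend [CharZero F] (t1 : ⁅h, e⁆ = (2 : F) • e) (t3 : ⁅e, f⁆ = h)
    (hn : e ^ (n + 1) = 0) (hr : LinearMap.range e = LinearMap.ker (e ^ n))
    (hk : finrank F (LinearMap.ker e) = k) (hV : finrank F V = k * (n + 1))
    (m : ℕ) (y : lowest h n →ₗ[F] lowest h n) :
    ∃ x : Module.End F V, ∀ (i : ℕ) (u : lowest h n),
      x ((e ^ i) u) = (e ^ (i + m)) (y u : V) := by
  obtain ⟨hL, hsup⟩ := lowest_finrank t1 t3 hn hr hk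
  -- `Φ c = ∑ i, e ^ i (c i)` is surjective between spaces of equal dimension.
  let Φ : (Fin (n + 1) → lowest h n) →ₗ[F] V :=
    ∑ i : Fin (n + 1), (e ^ (i : ℕ)) ∘ₗ (lowest h n).subtype ∘ₗ LinearMap.proj i
  let Ψ : (Fin (n + 1) → lowest h n) →ₗ[F] V :=
    ∑ i : Fin (n + 1), (e ^ ((i : ℕ) + m)) ∘ₗ (lowest h n).subtype ∘ₗ y ∘ₗ LinearMap.proj i
  have hΦs : ∀ (i : Fin (n + 1)) u, Φ (Pi.single i u) = (e ^ (i : ℕ)) (u : V) := by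
    intro i u
    simp only [Φ, LinearMap.sum_apply, LinearMap.comp_apply, LinearMap.proj_apply]
    rw [Finset.sum_eq_single i]
    · simp
    · intro j _ hj
      simp [Pi.single_eq_of_ne hj]
    · simp
  have hΨs : ∀ (i : Fin (n + 1)) u, Ψ (Pi.single i u) = (e ^ ((i : ℕ) + m)) (y u : V) := by
    intro i u
    simp only [Ψ, LinearMap.sum_apply, LinearMap.comp_apply, LinearMap.proj_apply]
    rw [Finset.sum_eq_single i]
    · simp
    · intro j _ hj
      simp [Pi.single_eq_of_ne hj]
    · simp
  have hsurj : Function.Surjective Φ := by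
    intro v
    refine span_eq_top hn hsup (LinearMap.range Φ) ?_ v
    intro i u hu
    by_cases hi : i < n + 1
    · exact ⟨Pi.single ⟨i, hi⟩ ⟨u, hu⟩, hΦs _ _⟩
    · rw [pow_eq_zero_of_le (not_lt.1 hi) hn]
      exact Submodule.zero_mem _
  have hdim : finrank F (Fin (n + 1) → lowest h n) = finrank F V := by
    rw [finrank_pi_fintype, hV]
    simp [hL, mul_comm]
  have hinj := (LinearMap.injective_iff_surjective_of_finrank_eq_finrank hdim).2 hsurj
  let E := LinearEquiv.ofBijective Φ ⟨hinj, hsurj⟩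
  refine ⟨Ψ ∘ₗ E.symm.toLinearMap, fun i u => ?_⟩
  by_cases hi : i < n + 1
  · have : E.symm ((e ^ i) u) = Pi.single ⟨i, hi⟩ u := by
      rw [LinearEquiv.symm_apply_eq]
      exact (hΦs ⟨i, hi⟩ u).symm
    simp only [LinearMap.comp_apply, LinearEquiv.coe_coe]
    rw [this, hΨs]
  · rw [pow_eq_zero_of_le (not_lt.1 hi) hn,
      pow_eq_zero_of_le (show n + 1 ≤ i + m by omega) hn]
    simp

end Sl2

/-! ### Spaces of symmetric and skew matrices -/

section Matrices

variable {F : Type*} [Field F]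

/-- The square matrices `M` with `M = τ • Mᵀ`. -/
def tauMat (F : Type*) [Field F] (k : ℕ) (τ : F) : Submodule F (Matrix (Fin k) (Fin k) F) where
  carrier := {M | ∀ i j, M i j = τ * M j i}
  add_mem' {a b} ha hb i j := by
    simp only [Matrix.add_apply, ha i j, hb i j]; ring
  zero_mem' i j := by simp
  smul_mem' c a ha i j := by
    simp only [Matrix.smul_apply, smul_eq_mul, ha i j]; ring

lemma finrank_tauMat_one (k : ℕ) : finrank F (tauMat F k 1) = k * (k + 1) / 2 := by
  let E : tauMat F k (1 : F) ≃ₗ[F] (Sym2 (Fin k) → F) :=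
    { toFun := fun M => Sym2.lift ⟨fun i j => M.1 i j, fun i j => by simpa using M.2 i j⟩
      invFun := fun φ => ⟨Matrix.of fun i j => φ s(i, j), fun i j => by simp [Sym2.eq_swap]⟩
      map_add' := fun a b => by
        ext p; induction p with | _ i j => simp
      map_smul' := fun c a => by
        ext p; induction p with | _ i j => simp
      left_inv := fun M => by ext i j; simp
      right_inv := fun φ => by
        ext p; induction p with | _ i j => simp }
  rw [E.finrank_eq, finrank_fintype_fun_eq_card, Sym2.card, Fintype.card_fin,
    Nat.choose_two_right, Nat.add_sub_cancel, mul_comm]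

/-- Skew matrices are the kernel of `M ↦ M + Mᵀ`, whose image is the space of symmetric ones. -/
lemma finrank_tauMat_neg_one [CharZero F] (k : ℕ) :
    finrank F (tauMat F k (-1)) = k * (k - 1) / 2 := by
  let S : Matrix (Fin k) (Fin k) F →ₗ[F] Matrix (Fin k) (Fin k) F :=
    LinearMap.id + (Matrix.transposeLinearEquiv (Fin k) (Fin k) F F).toLinearMap
  have hS : ∀ M i j, S M i j = M i j + M j i := fun M i j => rfl
  have hker : LinearMap.ker S = tauMat F k (-1) := by
    ext M
    rw [LinearMap.mem_ker, ← Matrix.ext_iff]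
    simp only [hS, Matrix.zero_apply, add_eq_zero_iff_eq_neg]
    exact forall₂_congr fun i j => by rw [neg_one_mul]
  have hrange : LinearMap.range S = tauMat F k 1 := by
    apply le_antisymm
    · rintro _ ⟨M, rfl⟩ i j
      rw [hS, hS, one_mul, add_comm]
    · intro M hM
      refine ⟨(2 : F)⁻¹ • M, ?_⟩
      ext i j
      have := hM i j
      rw [one_mul] at this
      rw [hS, Matrix.smul_apply, Matrix.smul_apply, ← this, ← add_smul, ← two_mul,
        mul_inv_cancel₀ two_ne_zero, one_smul]
  have h1 := S.finrank_range_add_finrank_ker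
  rw [hker, hrange, finrank_tauMat_one, finrank_matrix] at h1
  simp only [Fintype.card_fin, finrank_self, mul_one] at h1
  have h2 : 2 * (k * (k + 1) / 2) = k * (k + 1) := Nat.mul_div_cancel' (Nat.even_mul_succ_self k).two_dvd
  have h3 : 2 * (k * (k - 1) / 2) = k * (k - 1) :=
    Nat.mul_div_cancel' (Nat.even_mul_pred_self k).two_dvd
  have h4 : k * (k + 1) + k * (k - 1) = 2 * (k * k) := by
    cases k with
    | zero => rfl
    | succ k => simp only [Nat.add_sub_cancel]; ring
  omega

end Matrices

/-! ### The invariant form and the isomorphism with matrices -/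

section Form

variable {F V : Type*} [Field F] [AddCommGroup V] [Module F V]
  {e h f : Module.End F V} {B : LinearMap.BilinForm F V} {n k m : ℕ} {ε : F}

lemma form_pow (he : ∀ v w, B (e v) w = -B v (e w)) (i : ℕ) (v w : V) :
    B ((e ^ i) v) w = (-1) ^ i * B v ((e ^ i) w) := by
  induction i generalizing v w with
  | zero => simp
  | succ i ih =>
    rw [pow_succ' e, Module.End.mul_apply, he, ih, ← Module.End.mul_apply, ← pow_succ, ← pow_succ',
      pow_succ (-1 : F)]
    ring

/-- Weight spaces whose weights do not sum to zero are orthogonal. -/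
lemma form_weight (hh : ∀ v w, B (h v) w = -B v (h w)) {α β : F} {v w : V}
    (hv : h v = α • v) (hw : h w = β • w) (hαβ : α + β ≠ 0) : B v w = 0 := by
  have := hh v w
  rw [hv, hw, map_smul, LinearMap.smul_apply, map_smul, smul_eq_mul, smul_eq_mul] at this
  have h2 : (α + β) * B v w = 0 := by rw [add_mul, this]; ring
  exact (mul_eq_zero.1 h2).resolve_left hαβ

lemma form_lowest [CharZero F] (hh : ∀ v w, B (h v) w = -B v (h w))
    (t1 : ⁅h, e⁆ = (2 : F) • e) {u w : V} (hu : u ∈ lowest h n) (hw : w ∈ lowest h n) {j : ℕ}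
    (hj : j ≠ n) : B u ((e ^ j) w) = 0 := by
  refine form_weight hh (mem_lowest.1 hu) (h_pow_lowest t1 hw j) ?_
  have h1 : (-(n : F) + (2 * (j : F) - n)) = 2 * ((j : F) - n) := by ring
  rw [h1]
  exact mul_ne_zero two_ne_zero (sub_ne_zero.2 (Nat.cast_injective.ne hj))

variable [FiniteDimensional F V]

/-- The form `φ u w = B u (e ^ n w)` on the lowest weight space. -/
def lowForm (B : LinearMap.BilinForm F V) (e h : Module.End F V) (n : ℕ) :
    LinearMap.BilinForm F (lowest h n) :=
  B.compl₁₂ (lowest h n).subtype ((e ^ n) ∘ₗ (lowest h n).subtype)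

omit [FiniteDimensional F V] in
lemma lowForm_apply (u w : lowest h n) : lowForm B e h n u w = B u ((e ^ n) (w : V)) := rfl

lemma lowForm_nondegenerate [CharZero F] (hB : B.Nondegenerate)
    (he : ∀ v w, B (e v) w = -B v (e w))
    (t1 : ⁅h, e⁆ = (2 : F) • e) (t3 : ⁅e, f⁆ = h)
    (hn : e ^ (n + 1) = 0) (hr : LinearMap.range e = LinearMap.ker (e ^ n))
    (hsup : lowest h n ⊔ LinearMap.range e = ⊤) :
    (lowForm B e h n).Nondegenerate := by
  apply LinearMap.BilinForm.Nondegenerate.ofSeparatingLeft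
  intro u hu
  have h1 : (e ^ n) (u : V) = 0 := by
    refine hB.1 _ fun v => ?_
    rw [form_pow he]
    have hv : v ∈ lowest h n ⊔ LinearMap.range e := hsup ▸ Submodule.mem_top
    obtain ⟨w, hw, _, ⟨w', rfl⟩, rfl⟩ := Submodule.mem_sup.1 hv
    have h2 := hu ⟨w, hw⟩
    rw [lowForm_apply] at h2
    rw [map_add, ← Module.End.mul_apply, ← pow_succ, hn, LinearMap.zero_apply, add_zero, h2,
      mul_zero]
  have h2 : (u : V) ∈ LinearMap.range e := by rw [hr]; exact h1
  exact Subtype.ext (lowest_inf_range t1 t3 hn hr u.2 h2)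

/-- The space `G = g(2m)_e` is isomorphic, via `x ↦ B u (e ^ (n - m) (x w))`, to the space of
`k × k` matrices that are symmetric or skew according to the sign `(-1) ^ (n + 1) * ε * (-1) ^ m`.
-/
lemma finrank_eq_tauMat [CharZero F] (hB : B.Nondegenerate) (hε : ε = 1 ∨ ε = -1)
    (hsym : ∀ v w, B v w = ε * B w v)
    (he : ∀ v w, B (e v) w = -B v (e w)) (hh : ∀ v w, B (h v) w = -B v (h w))
    (t1 : ⁅h, e⁆ = (2 : F) • e) (t3 : ⁅e, f⁆ = h)
    (hn : e ^ (n + 1) = 0) (hk : finrank F (LinearMap.ker e) = k)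
    (hV : finrank F V = k * (n + 1)) (hm : m ≤ n)
    (G : Submodule F (Module.End F V))
    (hG : ∀ x, x ∈ G ↔ (∀ v w, B (x v) w = -B v (x w)) ∧
      (∀ v, h (x v) = x (h v) + (2 * (m : F)) • x v) ∧ ∀ v, e (x v) = x (e v)) :
    finrank F G = finrank F (tauMat F k ((-1) ^ (n + 1) * ε * (-1) ^ m)) := by
  have hr := ker_pow_eq_range hn hk hV
  obtain ⟨hL, hsup⟩ := lowest_finrank t1 t3 hn hr hk
  have hφ := lowForm_nondegenerate hB he t1 t3 hn hr hsup
  let b : Basis (Fin k) F (lowest h n) := finBasisOfFinrankEq F _ hL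
  have hcomm : ∀ x ∈ G, ∀ i v, (e ^ i) (x v) = x ((e ^ i) v) := by
    intro x hx i v
    induction i generalizing v with
    | zero => simp
    | succ i ih =>
      rw [pow_succ, Module.End.mul_apply, ((hG x).1 hx).2.2, ih, Module.End.mul_apply]
  have hsign : ((-1 : F) ^ (n - m)) = (-1) ^ n * (-1) ^ m := by
    have h1 : (-1 : F) ^ n = (-1) ^ (n - m) * (-1) ^ m := by rw [← pow_add, Nat.sub_add_cancel hm]
    rw [h1, mul_assoc, ← mul_pow, neg_one_mul, neg_neg, one_pow, mul_one]
  have hsymψ : ∀ x ∈ G, ∀ u w : V, B u ((e ^ (n - m)) (x w)) =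
      ((-1) ^ (n + 1) * ε * (-1) ^ m) * B w ((e ^ (n - m)) (x u)) := by
    intro x hx u w
    rw [hsym, form_pow he, hsign, ((hG x).1 hx).1, ← hcomm x hx]
    ring
  -- `x` is sent to the matrix of the form `(u, w) ↦ B u (e ^ (n - m) (x w))` on `lowest h n`.
  let T : G →ₗ[F] tauMat F k ((-1) ^ (n + 1) * ε * (-1) ^ m) :=
    { toFun := fun x => ⟨Matrix.of fun i j => B (b i) ((e ^ (n - m)) (x.1 (b j))),
        fun i j => hsymψ x.1 x.2 _ _⟩
      map_add' := fun x y => by ext i j; simp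
      map_smul' := fun c x => by ext i j; simp }
  have hT : ∀ x i j, (T x).1 i j = B (b i) ((e ^ (n - m)) (x.1 (b j))) := fun _ _ _ => rfl
  refine (LinearEquiv.ofBijective T ⟨?_, ?_⟩).finrank_eq
  · rw [injective_iff_map_eq_zero]
    rintro ⟨x, hx⟩ h0
    have h1 : ∀ u w : lowest h n, B u ((e ^ (n - m)) (x w)) = 0 := by
      have h2 : B.compl₁₂ (lowest h n).subtype
          ((e ^ (n - m)) ∘ₗ x ∘ₗ (lowest h n).subtype) = 0 := by
        refine b.ext fun i => b.ext fun j => ?_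
        have := hT ⟨x, hx⟩ i j
        rw [h0] at this
        exact this.symm
      intro u w
      exact LinearMap.congr_fun₂ h2 u w
    -- For `j ≠ n - m` the pairing of `e ^ j u` with `x w` vanishes for weight reasons.
    have h3 : ∀ w ∈ lowest h n, x w = 0 := by
      intro w hw
      refine hB.2 _ fun v => ?_
      refine span_eq_top hn hsup (LinearMap.ker (B.flip (x w))) ?_ v
      intro j u hu
      change B ((e ^ j) u) (x w) = 0
      by_cases hj : j = n - m
      · rw [form_pow he, hj, h1 ⟨u, hu⟩ ⟨w, hw⟩, mul_zero]
      · have hxw : h (x w) = (2 * (m : F) - n) • x w := by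
          rw [((hG x).1 hx).2.1, mem_lowest.1 hw, map_smul]; module
        refine form_weight hh (h_pow_lowest t1 hu j) hxw ?_
        have h4 : (2 * (j : F) - n + (2 * (m : F) - n)) = 2 * (((j + m : ℕ) : F) - n) := by
          push_cast; ring
        rw [h4]
        exact mul_ne_zero two_ne_zero
          (sub_ne_zero.2 (Nat.cast_injective.ne (show j + m ≠ n by omega)))
    apply Subtype.ext
    refine LinearMap.ext fun v => ?_
    refine span_eq_top hn hsup (LinearMap.ker x) ?_ v
    intro j u hu
    rw [LinearMap.mem_ker, ← hcomm x hx, h3 u hu, map_zero]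
  · rintro ⟨M, hM⟩
    -- `y` is the endomorphism of `lowest h n` with `φ (b i) (y (b j)) = M i j`.
    let ψ : LinearMap.BilinForm F (lowest h n) := Matrix.toBilin b M
    have hψb : ∀ i j, ψ (b i) (b j) = M i j := fun i j => by
      simp [ψ, Matrix.toBilin_apply, Finsupp.single_apply]
    have hψ : ∀ u w, ψ u w = ((-1) ^ (n + 1) * ε * (-1) ^ m) * ψ w u := by
      have h1 : ψ = ((-1) ^ (n + 1) * ε * (-1) ^ m) • ψ.flip := by
        refine b.ext fun i => b.ext fun j => ?_
        change ψ (b i) (b j) = _ * ψ (b j) (b i)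
        rw [hψb, hψb]
        exact hM i j
      intro u w
      exact LinearMap.congr_fun₂ h1 u w
    let y : lowest h n →ₗ[F] lowest h n :=
      ((lowForm B e h n).flip.toDual hφ.flip).symm.toLinearMap ∘ₗ ψ.flip
    have hy : ∀ u w : lowest h n, B (u : V) ((e ^ n) (y w : V)) = ψ u w := by
      intro u w
      have := LinearMap.BilinForm.apply_toDual_symm_apply (hB := hφ.flip) (ψ.flip w) u
      exact this
    obtain ⟨x, hx⟩ := exists_extend t1 t3 hn hr hk hV m y
    have hxG : x ∈ G := by
      refine (hG x).2 ⟨?_, ?_, ?_⟩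
      · -- Test skewness on the pairs `(e ^ a u, e ^ c w)`.
        intro v w
        rw [← sub_eq_zero, sub_neg_eq_add]
        refine span_eq_top hn hsup
          (LinearMap.ker (((B ∘ₗ x) + B.compl₂ x).flip w)) ?_ v
        intro a u hu
        rw [LinearMap.mem_ker, LinearMap.flip_apply]
        refine span_eq_top hn hsup
          (LinearMap.ker (((B ∘ₗ x) + B.compl₂ x) ((e ^ a) u))) ?_ w
        intro c w hw
        have h1 := hx a ⟨u, hu⟩
        have h2 := hx c ⟨w, hw⟩
        simp only at h1 h2
        simp only [LinearMap.mem_ker, LinearMap.add_apply, LinearMap.comp_apply,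
          LinearMap.compl₂_apply]
        rw [h1, h2, form_pow he, form_pow he, ← Module.End.mul_apply, ← pow_add,
          ← Module.End.mul_apply, ← pow_add]
        by_cases hn' : a + m + c = n
        · have h3 : a + (c + m) = n := by omega
          rw [hn', h3]
          have h4 := hy ⟨u, hu⟩ ⟨w, hw⟩
          have h5 := hy ⟨w, hw⟩ ⟨u, hu⟩
          simp only at h4 h5
          rw [h4, hψ, hsym, form_pow he, h5, pow_add]
          have hε2 : ε * ε = 1 := by rcases hε with rfl | rfl <;> ring
          ring
        · rw [form_lowest hh t1 (y ⟨u, hu⟩).2 hw hn',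
            form_lowest hh t1 hu (y ⟨w, hw⟩).2 (show a + (c + m) ≠ n by omega)]
          ring
      · intro v
        rw [← sub_eq_zero]
        refine span_eq_top hn hsup
          (LinearMap.ker (h ∘ₗ x - (x ∘ₗ h + (2 * (m : F)) • x))) ?_ v
        intro i u hu
        have h1 := hx i ⟨u, hu⟩
        simp only at h1
        simp only [LinearMap.mem_ker, LinearMap.sub_apply, LinearMap.add_apply,
          LinearMap.comp_apply, LinearMap.smul_apply]
        rw [h_pow_lowest t1 hu, map_smul, h1, h_pow_lowest t1 (y ⟨u, hu⟩).2]
        push_cast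
        module
      · intro v
        rw [← sub_eq_zero]
        refine span_eq_top hn hsup (LinearMap.ker (e ∘ₗ x - x ∘ₗ e)) ?_ v
        intro i u hu
        have h1 := hx i ⟨u, hu⟩
        have h2 := hx (i + 1) ⟨u, hu⟩
        simp only at h1 h2
        simp only [LinearMap.mem_ker, LinearMap.sub_apply, LinearMap.comp_apply]
        rw [h1, ← Module.End.mul_apply, ← Module.End.mul_apply e, ← pow_succ', ← pow_succ', h2,
          sub_eq_zero, add_right_comm]
    refine ⟨⟨x, hxG⟩, Subtype.ext (Matrix.ext fun i j => ?_)⟩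
    have h1 := hx 0 (b j)
    rw [pow_zero, Module.End.one_apply, zero_add] at h1
    rw [hT, h1, ← Module.End.mul_apply, ← pow_add, Nat.sub_add_cancel hm, hy, hψb]

end Form

end RectNilp

/-- Dimensions of `g(2m)_e` for nilpotent `e` of rectangular Jordan type `(d^k)`
in `so(V)` or `sp(V)`. -/
theorem g2me_rectangular_dim
    (F : Type*) [Field F] [IsAlgClosed F] [CharZero F]
    (V : Type*) [AddCommGroup V] [Module F V] [FiniteDimensional F V]
    (B : LinearMap.BilinForm F V) (hB : B.Nondegenerate)
    (ε : F) (hε : ε = 1 ∨ ε = -1)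
    (hsym : ∀ v w : V, B v w = ε * B w v)
    (g : Set (Module.End F V))
    (hg : g = {x : Module.End F V | ∀ v w : V, B (x v) w = - B v (x w)})
    (d k : ℕ) (hd1 : 1 ≤ d) (hk1 : 1 ≤ k)
    (e h f : Module.End F V) (he : e ∈ g) (hh : h ∈ g) (hf : f ∈ g)
    (he1 : e ^ d = 0)
    (he2 : finrank F (LinearMap.ker e) = k)
    (he3 : finrank F V = k * d)
    (t1 : ⁅h, e⁆ = (2 : F) • e) (t2 : ⁅h, f⁆ = (-2 : F) • f) (t3 : ⁅e, f⁆ = h)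
    (gme : ℕ → Submodule F (Module.End F V))
    (hgme : ∀ m : ℕ, (gme m : Set (Module.End F V)) =
      {x ∈ g | ⁅h, x⁆ = ((2 * m : ℕ) : F) • x ∧ ⁅e, x⁆ = 0}) :
    ∀ m : ℕ, m < d →
      ((-1 : F) ^ d * ε = 1 →
        (Even m → finrank F (gme m) = k * (k + 1) / 2) ∧
        (Odd m → finrank F (gme m) = k * (k - 1) / 2))
      ∧ ((-1 : F) ^ d * ε = -1 →
        (Even m → finrank F (gme m) = k * (k - 1) / 2) ∧
        (Odd m → finrank F (gme m) = k * (k + 1) / 2)) := by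
  obtain ⟨n, rfl⟩ : ∃ n, d = n + 1 := ⟨d - 1, by omega⟩
  subst hg
  intro m hm
  have key := RectNilp.finrank_eq_tauMat hB hε hsym he hh t1 t3 he1 he2 he3
    (Nat.lt_succ_iff.1 hm) (gme m) (fun x => by
      rw [← SetLike.mem_coe, hgme m]
      refine and_congr Iff.rfl (and_congr ?_ ?_)
      · rw [LinearMap.ext_iff]
        refine forall_congr' fun v => ?_
        simp only [Ring.lie_def, LinearMap.sub_apply, Module.End.mul_apply, LinearMap.smul_apply]
        rw [sub_eq_iff_eq_add']
        push_cast
        rfl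
      · rw [LinearMap.ext_iff]
        refine forall_congr' fun v => ?_
        simp only [Ring.lie_def, LinearMap.sub_apply, Module.End.mul_apply, LinearMap.zero_apply]
        rw [sub_eq_zero])
  refine ⟨fun hs => ⟨fun hm => ?_, fun hm => ?_⟩, fun hs => ⟨fun hm => ?_, fun hm => ?_⟩⟩ <;>
    rw [key, hs, hm.neg_one_pow]
  · rw [mul_one, RectNilp.finrank_tauMat_one]
  · rw [one_mul, RectNilp.finrank_tauMat_neg_one]
  · rw [mul_one, RectNilp.finrank_tauMat_neg_one]
  · rw [neg_one_mul, neg_neg, RectNilp.finrank_tauMat_one]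
end
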